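/- arXiv:1804.07662 — 3 statements merged into one kernel-verified Lean document; each statement's English description precedes it below -/
import Mathlib

section
/- The set A₀ = {β > 1 : the sequence of zero-run lengths (l_n(β))_{n≥1} in the β-expansion of 1 is bounded} is dense in (1, ∞) and has Hausdorff dimension 1. -/
open Filter MeasureTheory Set

/-- The β-transformation T_β(x) = βx − ⌊βx⌋. -/
noncomputable def betaT (β : ℝ) : ℝ → ℝ := fun x => β * x - ⌊β * x⌋

/-- The (i+1)-th digit of the β-expansion of x (0-indexed). -/
noncomputable def betaDigit (β x : ℝ) (i : ℕ) : ℤ := ⌊β * (betaT β)^[i] x⌋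

/-- A finite word is β-admissible if some x ∈ [0,1) has β-expansion beginning with it. -/
def IsAdmissibleWord (β : ℝ) (w : List ℤ) : Prop :=
  ∃ x ∈ Set.Ico (0:ℝ) 1, ∀ i (h : i < w.length), w.get ⟨i, h⟩ = betaDigit β x i

/-- An infinite sequence is β-admissible if it is the digit sequence of some x ∈ [0,1). -/
def IsAdmissibleSeq (β : ℝ) (e : ℕ → ℤ) : Prop :=
  ∃ x ∈ Set.Ico (0:ℝ) 1, ∀ i, e i = betaDigit β x i

/-- The basic interval (cylinder) of a word. -/
def cylinder (β : ℝ) (w : List ℤ) : Set ℝ :=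
  {x | x ∈ Set.Ico (0:ℝ) 1 ∧ ∀ i (h : i < w.length), betaDigit β x i = w.get ⟨i, h⟩}

/-- A basic interval is full if its length is β^{-n}. -/
def IsFull (β : ℝ) (w : List ℤ) : Prop :=
  volume (cylinder β w) = ENNReal.ofReal (1 / β ^ w.length)

-- The infinite β-expansion of 1: the periodic modification if the expansion of 1
-- terminates, and the expansion of 1 itself otherwise (0-indexed).
open Classical in
noncomputable def betaStar (β : ℝ) : ℕ → ℤ :=
  if h : ∃ n, betaDigit β 1 n ≠ 0 ∧ ∀ i, n < i → betaDigit β 1 i = 0 then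
    fun i =>
      if i % (h.choose + 1) = h.choose then betaDigit β 1 h.choose - 1
      else betaDigit β 1 (i % (h.choose + 1))
  else betaDigit β 1

/-- Strict lexicographic order on integer sequences. -/
def lexLt (a b : ℕ → ℤ) : Prop := ∃ n, (∀ i, i < n → a i = b i) ∧ a n < b n

/-- l_n(β): the length of the longest run of zeros following the n-th digit
(1-indexed position n) in the infinite β-expansion of 1. -/
noncomputable def zeroRunLen (β : ℝ) (n : ℕ) : ℕ∞ :=
  ⨆ k ∈ {k : ℕ | ∀ j, j < k → betaStar β (n + j) = 0}, (k : ℕ∞)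

/-- A₀: the set of bases β > 1 with bounded zero-runs in the expansion of 1. -/
def A0 : Set ℝ := {β | 1 < β ∧ ∃ C : ℕ, ∀ n, 1 ≤ n → zeroRunLen β n ≤ (C : ℕ∞)}

/-- The waiting time W_n^β(x,y): first k ≥ 1 with T_β^k x in the n-th basic interval of y. -/
noncomputable def waitingTime (β x y : ℝ) (n : ℕ) : ℕ∞ :=
  sInf {k : ℕ∞ | ∃ m : ℕ, k = (m : ℕ∞) ∧ 1 ≤ m ∧
    ∀ i, i < n → betaDigit β ((betaT β)^[m] x) i = betaDigit β y i}

/-- (log W_n^β(x,y)) / n as an extended real, with value ⊤ when W_n = ∞. -/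
noncomputable def waitingRatio (β x y : ℝ) (n : ℕ) : EReal :=
  if h : waitingTime β x y n = ⊤ then ⊤
  else (((Real.log ((waitingTime β x y n).untop h : ℕ)) / n : ℝ) : EReal)

lemma bX_succ (β : ℝ) (k : ℕ) :
    (betaT β)^[k+1] 1 = β * (betaT β)^[k] 1 - betaDigit β 1 k := by
  rw [Function.iterate_succ_apply']; rfl

lemma bX_nonneg (β : ℝ) (k : ℕ) : 0 ≤ (betaT β)^[k] 1 := by
  cases k with
  | zero => simp
  | succ k =>
    rw [bX_succ, betaDigit]
    linarith [Int.floor_le (β * (betaT β)^[k] 1)]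

lemma bX_le (β : ℝ) (k : ℕ) : (betaT β)^[k] 1 ≤ 1 := by
  cases k with
  | zero => simp
  | succ k =>
    rw [bX_succ, betaDigit]
    linarith [Int.lt_floor_add_one (β * (betaT β)^[k] 1)]

lemma bDigit_zero (β : ℝ) : betaDigit β 1 0 = ⌊β⌋ := by simp [betaDigit]

/-- Simple Parry numbers are in A0. -/
lemma mem_A0_of_zero {β : ℝ} (hβ : 1 < β) {m : ℕ} (hm : (betaT β)^[m+1] 1 = 0) : β ∈ A0 := by
  classical
  have hz : ∀ k, m + 1 ≤ k → (betaT β)^[k] 1 = 0 := by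
    intro k hk
    induction k, hk using Nat.le_induction with
    | base => exact hm
    | succ k hk ih =>
      rw [Function.iterate_succ_apply', ih]; simp [betaT]
  have hd : ∀ k, m + 1 ≤ k → betaDigit β 1 k = 0 := by
    intro k hk; simp [betaDigit, hz k hk]
  have hex0 : ∃ n, (betaT β)^[n+1] 1 = 0 := ⟨m, hm⟩
  have hd0 : 1 ≤ betaDigit β 1 0 := by
    rw [bDigit_zero, Int.le_floor]; simpa using hβ.le
  have hex : ∃ n, betaDigit β 1 n ≠ 0 ∧ ∀ i, n < i → betaDigit β 1 i = 0 := by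
    have hne : {n | betaDigit β 1 n ≠ 0}.Nonempty := ⟨0, by simp only [mem_ofPred_eq]; omega⟩
    have hb : BddAbove {n | betaDigit β 1 n ≠ 0} := by
      refine ⟨m, fun n hn => ?_⟩
      by_contra hlt
      exact hn (hd n (by omega))
    refine ⟨sSup {n | betaDigit β 1 n ≠ 0}, Nat.sSup_mem hne hb, fun i hi => ?_⟩
    by_contra hc
    exact absurd (le_csSup hb hc) (by omega)
  refine ⟨hβ, hex.choose + 1, fun n _ => ?_⟩
  have hspec := hex.choose_spec
  set N := hex.choose with hN
  have hstar0 : ∀ i, i % (N + 1) = 0 → betaStar β i ≠ 0 := by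
    intro i hi
    rw [betaStar, dif_pos hex]
    rw [← hN, hi]
    split_ifs with h0
    · -- N = 0
      rw [← h0] at hspec ⊢
      have hall : ∀ k, (betaT β)^[1 + k] 1 = β ^ k * (betaT β)^[1] 1 := by
        intro k
        induction k with
        | zero => simp
        | succ k ih =>
          rw [← add_assoc, bX_succ, hspec.2 (1 + k) (by omega), ih, pow_succ']
          simp [mul_assoc]
      have h1 : (betaT β)^[1] 1 = 0 := by
        have := hall m
        rw [add_comm 1 m, hm] at this
        have hp : (0:ℝ) < β ^ m := by positivity
        rcases mul_eq_zero.1 this.symm with h | h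
        · exact absurd h hp.ne'
        · exact h
      have h2 := bX_succ β 0
      rw [zero_add, h1] at h2
      simp only [Function.iterate_zero, id_eq, mul_one] at h2
      intro h3
      have h4 : betaDigit β 1 0 = 1 := by omega
      rw [h4] at h2
      push_cast at h2
      linarith
    · omega
  unfold zeroRunLen
  refine iSup₂_le fun k hk => ?_
  by_contra hlt
  have hlt' : N + 1 < k := by
    rw [not_le] at hlt
    exact_mod_cast hlt
  simp only [mem_ofPred_eq] at hk
  have hmod : n % (N+1) < N + 1 := Nat.mod_lt n (Nat.succ_pos N)
  by_cases h0 : n % (N+1) = 0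
  · exact hstar0 n h0 (by simpa using hk 0 (by omega))
  · refine hstar0 (n + (N + 1 - n % (N+1))) ?_ (hk _ (by omega))
    have h1 := Nat.div_add_mod n (N+1)
    have : n + (N + 1 - n % (N+1)) = (N+1) * (n / (N+1) + 1) := by
      rw [mul_add]; omega
    rw [this]; simp

/-- Density of simple Parry numbers. -/
lemma exists_zero_between {a b : ℝ} (ha : 1 < a) (hab : a < b) :
    ∃ β ∈ Icc a b, ∃ m : ℕ, (betaT β)^[m+1] 1 = 0 := by
  by_contra hcon
  push Not at hcon
  have key : ∀ n : ℕ, ContinuousOn (fun β => (betaT β)^[n] 1) (Icc a b) ∧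
      ∀ k < n, betaDigit a 1 k = betaDigit b 1 k := by
    intro n
    induction n with
    | zero => simp [continuousOn_const]
    | succ n ih =>
      have hcont : ContinuousOn (fun β => β * (betaT β)^[n] 1) (Icc a b) :=
        continuousOn_id.mul ih.1
      have hconst : ∀ x ∈ Icc a b, ∀ y ∈ Icc a b, betaDigit x 1 n ≤ betaDigit y 1 n := by
        intro x hx y hy
        by_contra hlt
        push Not at hlt
        have himg := (isPreconnected_Icc.image _ hcont).ordConnected.out
          (mem_image_of_mem _ hy) (mem_image_of_mem _ hx)
        have hmem : ((betaDigit x 1 n : ℤ) : ℝ) ∈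
            Icc (y * (betaT y)^[n] 1) (x * (betaT x)^[n] 1) := by
          constructor
          · have h1 := Int.lt_floor_add_one (y * (betaT y)^[n] 1)
            have h2 : ((betaDigit y 1 n : ℤ) : ℝ) + 1 ≤ betaDigit x 1 n := by exact_mod_cast hlt
            rw [betaDigit] at h2
            linarith
          · exact Int.floor_le _
        obtain ⟨z, hz, hzeq⟩ := himg hmem
        apply hcon z hz n
        simp only at hzeq
        rw [bX_succ, betaDigit, hzeq]
        simp
      have heq : ∀ x ∈ Icc a b, betaDigit x 1 n = betaDigit a 1 n := fun x hx =>
        le_antisymm (hconst x hx a (left_mem_Icc.2 hab.le)) (hconst a (left_mem_Icc.2 hab.le) x hx)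
      constructor
      · have : ContinuousOn (fun β => β * (betaT β)^[n] 1 - (betaDigit a 1 n : ℝ)) (Icc a b) :=
          hcont.sub continuousOn_const
        refine this.congr fun x hx => ?_
        simp only
        rw [bX_succ, heq x hx]
      · intro k hk
        rcases Nat.lt_succ_iff_lt_or_eq.1 hk with h | rfl
        · exact ih.2 k h
        · exact (heq b (right_mem_Icc.2 hab.le)).symm
  have hdig : ∀ k, betaDigit a 1 k = betaDigit b 1 k := fun k => (key (k+1)).2 k (by omega)
  have hgrow : ∀ k : ℕ, a ^ k * (b - a) ≤ (betaT b)^[k+1] 1 - (betaT a)^[k+1] 1 := by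
    intro k
    induction k with
    | zero =>
      rw [bX_succ, bX_succ, hdig]; simp
    | succ k ih =>
      rw [bX_succ b, bX_succ a, hdig, pow_succ']
      have h1 : 0 ≤ (b - a) * (betaT b)^[k+1] 1 := mul_nonneg (by linarith) (bX_nonneg _ _)
      nlinarith [mul_le_mul_of_nonneg_left ih (by linarith : (0:ℝ) ≤ a)]
  obtain ⟨k, hk⟩ := pow_unbounded_of_one_lt (1 / (b - a)) ha
  rw [div_lt_iff₀ (by linarith)] at hk
  have := hgrow k
  have h1 := bX_le b (k+1)
  have h2 := bX_nonneg a (k+1)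
  linarith

lemma A0_dense : Set.Ioi (1:ℝ) ⊆ closure A0 := by
  intro x hx
  rw [Metric.mem_closure_iff]
  intro ε hε
  obtain ⟨β, hβ, m, hm⟩ := exists_zero_between (a := x) (b := x + ε / 2) hx (by linarith)
  refine ⟨β, mem_A0_of_zero (lt_of_lt_of_le hx hβ.1) hm, ?_⟩
  rw [Real.dist_eq, abs_lt]
  constructor <;> linarith [hβ.1, hβ.2]

/-- The Cantor set. -/
def cantorE (b : ℕ) : Set ℝ := {β | β ∈ Ioo ((b:ℝ)+1) (b+2) ∧ ∃ d : ℕ → Fin b,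
  betaDigit β 1 0 = b + 1 ∧ ∀ i, betaDigit β 1 (i+1) = ((d i : ℕ) : ℤ) + 1}

lemma cantorE_subset (b : ℕ) : cantorE b ⊆ A0 := by
  rintro β ⟨hβ, d, h0, hd⟩
  have hne : ∀ i, betaDigit β 1 i ≠ 0 := by
    intro i
    cases i with
    | zero => rw [h0]; omega
    | succ i => rw [hd]; omega
  have hstar : betaStar β = betaDigit β 1 := by
    rw [betaStar, dif_neg]
    rintro ⟨n, _, hn⟩
    exact hne (n+1) (hn (n+1) (by omega))
  refine ⟨?_, 0, fun n _ => ?_⟩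
  · have : (0:ℝ) ≤ b := Nat.cast_nonneg b
    linarith [hβ.1]
  · unfold zeroRunLen
    refine iSup₂_le fun k hk => ?_
    rw [hstar] at hk
    rcases Nat.eq_zero_or_pos k with rfl | hk0
    · simp
    · exact absurd (hk 0 hk0) (hne _)

/-- Parry: existence of a base with the prescribed expansion. -/
lemma exists_base {b : ℕ} (hb : 1 ≤ b) (d : ℕ → Fin b) : ∃ β ∈ Ioo ((b:ℝ)+1) (b+2),
    betaDigit β 1 0 = b + 1 ∧ ∀ i, betaDigit β 1 (i+1) = ((d i : ℕ) : ℤ) + 1 := by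
  have hb' : (1:ℝ) ≤ b := by exact_mod_cast hb
  set c : ℕ → ℝ := fun i => ((d i : ℕ) : ℝ) + 1 with hc
  have hc1 : ∀ i, 1 ≤ c i := fun i => by simp [hc]
  have hcb : ∀ i, c i ≤ b := fun i => by
    have := (d i).2
    simp only [hc]
    exact_mod_cast this
  set t : ℕ → ℝ → ℝ := fun k β => ∑' i, c (k + i) * (β⁻¹) ^ (i+1) with ht
  have hgeo : ∀ β : ℝ, (b:ℝ) + 1 ≤ β → HasSum (fun i : ℕ => (b:ℝ) * (β⁻¹) ^ (i+1)) (b / (β - 1)) := by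
    intro β hβ
    have h1 : β⁻¹ < 1 := inv_lt_one_of_one_lt₀ (by linarith)
    have h := (hasSum_geometric_of_lt_one (inv_nonneg.2 (by linarith)) h1).mul_left (b * β⁻¹)
    have h' : ((fun i : ℕ => (b:ℝ) * (β⁻¹) ^ (i+1)) = fun i : ℕ => (b:ℝ) * β⁻¹ * (β⁻¹) ^ i) ∧
        (b:ℝ) / (β - 1) = b * β⁻¹ * (1 - β⁻¹)⁻¹ := by
     constructor
     · funext i; rw [pow_succ]; ring
     · have : β ≠ 0 := by linarith
       have : β - 1 ≠ 0 := by linarith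
       field_simp
    rw [h'.1, h'.2]; exact h
  have hbd : ∀ β : ℝ, (b:ℝ) + 1 ≤ β → ∀ k i, c (k+i) * (β⁻¹)^(i+1) ≤ b * (β⁻¹)^(i+1) := by
    intro β hβ k i
    exact mul_le_mul_of_nonneg_right (hcb _) (pow_nonneg (inv_nonneg.2 (by linarith)) _)
  have hpos : ∀ β : ℝ, (b:ℝ) + 1 ≤ β → ∀ k i, 0 < c (k+i) * (β⁻¹)^(i+1) := by
    intro β hβ k i
    have : 0 < β⁻¹ := inv_pos.2 (by linarith)
    have := hc1 (k+i)
    positivity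
  have hsum : ∀ β : ℝ, (b:ℝ) + 1 ≤ β → ∀ k, Summable (fun i => c (k+i) * (β⁻¹)^(i+1)) := 
    fun β hβ k => Summable.of_nonneg_of_le (fun i => (hpos β hβ k i).le) (hbd β hβ k)
      (hgeo β hβ).summable
  have htpos : ∀ β : ℝ, (b:ℝ) + 1 ≤ β → ∀ k, 0 < t k β := fun β hβ k =>
    (hsum β hβ k).tsum_pos (fun i => (hpos β hβ k i).le) 0 (hpos β hβ k 0)
  have htle : ∀ β : ℝ, (b:ℝ) + 1 ≤ β → ∀ k, t k β ≤ b / (β - 1) := fun β hβ k => by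
    rw [← (hgeo β hβ).tsum_eq]
    exact (hsum β hβ k).tsum_le_tsum (hbd β hβ k) (hgeo β hβ).summable
  have htlt : ∀ β : ℝ, (b:ℝ) + 1 < β → ∀ k, t k β < 1 := fun β hβ k => by
    refine (htle β hβ.le k).trans_lt ?_
    rw [div_lt_one (by linarith)]; linarith
  have hrec : ∀ β : ℝ, (b:ℝ) + 1 ≤ β → ∀ k, β * t k β = c k + t (k+1) β := by
    intro β hβ k
    have h0 : β ≠ 0 := by linarith
    simp only [ht]
    rw [(hsum β hβ k).tsum_eq_zero_add, mul_add, ← tsum_mul_left]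
    congr 1
    · simp; field_simp
    · congr 1; ext i
      rw [pow_succ _ (i+1), show k + (i+1) = k + 1 + i by ring]
      field_simp
  have hcont : ContinuousOn (t 0) (Icc ((b:ℝ)+1) (b+2)) := by
    refine continuousOn_tsum (u := fun i : ℕ => (b:ℝ) * (((b:ℝ)+1)⁻¹) ^ (i+1)) ?_
      (hgeo _ le_rfl).summable ?_
    · intro i
      refine continuousOn_const.mul (ContinuousOn.pow (continuousOn_id.inv₀ fun x hx => ?_) _)
      simp only [id]
      linarith [hx.1]
    · intro i x hx
      rw [Real.norm_of_nonneg (hpos x hx.1 0 i).le]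
      refine (hbd x hx.1 0 i).trans ?_
      have : 0 ≤ x⁻¹ := inv_nonneg.2 (by linarith [hx.1])
      have : x⁻¹ ≤ ((b:ℝ)+1)⁻¹ := inv_anti₀ (by linarith) hx.1
      gcongr
  have hivt := intermediate_value_Ioo (f := fun β => β - (b + 1) - t 0 β)
    (show (b:ℝ)+1 ≤ b + 2 by linarith)
    ((continuousOn_id.sub continuousOn_const).sub hcont)
  have h0mem : (0:ℝ) ∈ Ioo ((b:ℝ) + 1 - (b+1) - t 0 (b+1)) (b + 2 - (b+1) - t 0 (b+2)) := by
    constructor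
    · linarith [htpos (b+1) le_rfl 0]
    · linarith [htlt (b+2) (by linarith) 0]
  obtain ⟨β, hβ, hβ0⟩ := hivt h0mem
  simp only at hβ0
  refine ⟨β, hβ, ?_, ?_⟩
  · rw [bDigit_zero, Int.floor_eq_iff]
    push_cast
    constructor <;> linarith [hβ.1, hβ.2]
  · have hd0 : betaDigit β 1 0 = b + 1 := by
      rw [bDigit_zero, Int.floor_eq_iff]
      push_cast
      constructor <;> linarith [hβ.1, hβ.2]
    have hdig : ∀ k, (betaT β)^[k+1] 1 = t k β → betaDigit β 1 (k+1) = ((d k : ℕ) : ℤ) + 1 := by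
      intro k hk
      rw [betaDigit, hk, hrec β hβ.1.le, Int.floor_eq_iff]
      simp only [hc]
      push_cast
      constructor <;> linarith [htpos β hβ.1.le (k+1), htlt β hβ.1 (k+1)]
    have hX : ∀ k, (betaT β)^[k+1] 1 = t k β := by
      intro k
      induction k with
      | zero =>
        rw [bX_succ, hd0]
        simp only [Function.iterate_zero, id_eq, mul_one]
        push_cast
        linarith
      | succ k ih =>
        rw [bX_succ, hdig k ih, ih, hrec β hβ.1.le]
        simp [hc]
    exact fun i => hdig i (hX i)

/-- Separation. -/
lemma sep {b : ℕ} {x y : ℝ} (hx : x ∈ cantorE b) (hy : y ∈ cantorE b) {n : ℕ}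
    (heq : ∀ i < n, betaDigit x 1 (i+1) = betaDigit y 1 (i+1))
    (hlt : betaDigit x 1 (n+1) < betaDigit y 1 (n+1)) :
    1 ≤ |x - y| * ((b:ℝ)+2)^(n+3) := by
  obtain ⟨hxb, d, hx0, hd⟩ := hx
  obtain ⟨hyb, e, hy0, he⟩ := hy
  have hb0 : (0:ℝ) ≤ b := Nat.cast_nonneg b
  have heq' : ∀ i < n + 1, betaDigit x 1 i = betaDigit y 1 i := by
    intro i hi
    cases i with
    | zero => rw [hx0, hy0]
    | succ i => exact heq i (by omega)
  have hstep : ∀ k, |y * (betaT y)^[k] 1 - x * (betaT x)^[k] 1| ≤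
      |x - y| + (b + 2) * |(betaT y)^[k] 1 - (betaT x)^[k] 1| := by
    intro k
    have : y * (betaT y)^[k] 1 - x * (betaT x)^[k] 1 =
      (y - x) * (betaT x)^[k] 1 + y * ((betaT y)^[k] 1 - (betaT x)^[k] 1) := by ring
    rw [this]
    refine (abs_add_le _ _).trans ?_
    rw [abs_mul, abs_mul, abs_sub_comm y x, abs_of_nonneg (bX_nonneg x k),
      abs_of_nonneg (show 0 ≤ y by linarith [hyb.1])]
    have h1 := bX_le x k
    have h2 := hyb.2.le
    gcongr
    exact mul_le_of_le_one_right (abs_nonneg _) h1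
  have hgrow : ∀ k ≤ n + 1, |(betaT y)^[k] 1 - (betaT x)^[k] 1| ≤ |x - y| * (((b:ℝ)+2)^k - 1) := by
    intro k hk
    induction k with
    | zero => simp
    | succ k ih =>
      have h1 := hstep k
      have h2 := ih (by omega)
      rw [bX_succ, bX_succ, heq' k (by omega), sub_sub_sub_cancel_right, pow_succ]
      have h3 := mul_le_mul_of_nonneg_left h2 (show (0:ℝ) ≤ b + 2 by linarith)
      nlinarith [mul_nonneg (abs_nonneg (x-y)) hb0]
  have hup := hstep (n+1)
  have hg := hgrow (n+1) le_rfl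
  have hlow : 1 / ((b:ℝ)+2) ≤ y * (betaT y)^[n+1] 1 - x * (betaT x)^[n+1] 1 := by
    have e1 := bX_succ x (n+1)
    have e2 := bX_succ y (n+1)
    have e3 := bX_succ x (n+1+1)
    have e4 := bX_succ y (n+1+1)
    have f3 : x * (betaT x)^[n+1+1] 1 ≤ b + 1 := by
      have h1 := bX_le x (n+1+1+1)
      have h2 := (d (n+1)).2
      rw [hd] at e3
      push_cast at e3
      have h3 : ((d (n+1) : ℕ):ℝ) + 1 ≤ b := by exact_mod_cast h2
      linarith
    have f4 : 1 ≤ y * (betaT y)^[n+1+1] 1 := by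
      have h1 := bX_nonneg y (n+1+1+1)
      rw [he] at e4
      push_cast at e4
      have : (0:ℝ) ≤ ((e (n+1) : ℕ) : ℝ) := Nat.cast_nonneg _
      linarith
    have g3 : (betaT x)^[n+1+1] 1 ≤ 1 := bX_le _ _
    have g4 : 1 / ((b:ℝ)+2) ≤ (betaT y)^[n+1+1] 1 := by
      rw [div_le_iff₀ (by linarith)]
      nlinarith [bX_nonneg y (n+1+1), hyb.2]
    have g5 : ((betaDigit x 1 (n+1) : ℤ) : ℝ) + 1 ≤ betaDigit y 1 (n+1) := by exact_mod_cast hlt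
    linarith
  have habs := hlow.trans (le_abs_self _)
  rw [div_le_iff₀ (by linarith)] at habs
  have h5 : |y * (betaT y)^[n+1] 1 - x * (betaT x)^[n+1] 1| ≤ |x - y| * ((b:ℝ)+2)^(n+2) := by
    have h3 := mul_le_mul_of_nonneg_left hg (show (0:ℝ) ≤ b + 2 by linarith)
    rw [pow_succ _ (n+1)]
    nlinarith [mul_nonneg (abs_nonneg (x-y)) hb0, abs_nonneg (x-y)]
  rw [pow_succ _ (n+2), ← mul_assoc]
  exact habs.trans (mul_le_mul_of_nonneg_right h5 (by linarith))

/-- digits of the coding map -/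
noncomputable def codeD (b : ℕ) [NeZero b] (β : ℝ) : ℕ → Fin b :=
  fun i => Fin.ofNat b (betaDigit β 1 (i+1) - 1).toNat

lemma codeD_eq {b : ℕ} [NeZero b] {β : ℝ} {d : ℕ → Fin b}
    (h : ∀ i, betaDigit β 1 (i+1) = ((d i : ℕ) : ℤ) + 1) : codeD b β = d := by
  ext i
  simp [codeD, h, Nat.mod_eq_of_lt (d i).2]

lemma sep_code {b : ℕ} [NeZero b] {x y : ℝ} (hx : x ∈ cantorE b) (hy : y ∈ cantorE b)
    (hne : codeD b x ≠ codeD b y) :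
    ∃ n : ℕ, |Real.ofDigits (codeD b x) - Real.ofDigits (codeD b y)| ≤ ((b:ℝ)^n)⁻¹ ∧
      1 ≤ |x - y| * ((b:ℝ)+2)^(n+3) := by
  classical
  have hxd := hx
  have hyd := hy
  obtain ⟨_, d, _, hd⟩ := hxd
  obtain ⟨_, e, _, he⟩ := hyd
  rw [codeD_eq hd, codeD_eq he] at hne ⊢
  have hex : ∃ n, d n ≠ e n := Function.ne_iff.1 hne
  have hmin : ∀ i < Nat.find hex, d i = e i := fun i hi => by
    simpa using Nat.find_min hex hi
  have hspec := Nat.find_spec hex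
  refine ⟨Nat.find hex, Real.abs_ofDigits_sub_ofDigits_le hmin, ?_⟩
  rcases lt_or_gt_of_ne hspec with h | h
  · refine sep hx hy (fun i hi => by rw [hd, he, hmin i hi]) ?_
    rw [hd, he]
    have : (d (Nat.find hex) : ℕ) < e (Nat.find hex) := h
    omega
  · rw [abs_sub_comm]
    refine sep hy hx (fun i hi => by rw [hd, he, hmin i hi]) ?_
    rw [hd, he]
    have : (e (Nat.find hex) : ℕ) < d (Nat.find hex) := h
    omega

lemma dim_lower (k : ℕ) (hk : 1 ≤ k) :
    (((k:NNReal) / (k+1) : NNReal) : ENNReal) ≤ dimH A0 := by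
  have hk0 : (0:ℝ) < k := by exact_mod_cast hk
  have hb2 : 2 ≤ 2 ^ k := by
    calc 2 = 2 ^ 1 := by norm_num
      _ ≤ 2 ^ k := Nat.pow_le_pow_right (by norm_num) hk
  have : NeZero (2 ^ k) := ⟨by positivity⟩
  set s : NNReal := (k:NNReal) / (k+1) with hs
  have hs0 : 0 < s := by
    have : (0:NNReal) < k := by exact_mod_cast hk
    positivity
  have hsR : (s : ℝ) = k / (k+1) := by simp [hs]
  have hH : HolderOnWith ((2:NNReal) ^ (3 * k)) s
      (fun β => Real.ofDigits (codeD (2^k) β)) (cantorE (2^k)) := by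
    intro x hx y hy
    by_cases hne : codeD (2^k) x = codeD (2^k) y
    · simp [hne]
    obtain ⟨n, h1, h2⟩ := sep_code hx hy hne
    have hR : |Real.ofDigits (codeD (2^k) x) - Real.ofDigits (codeD (2^k) y)| ≤
        2 ^ (3 * k) * |x - y| ^ (s:ℝ) := by
      refine h1.trans ?_
      have hle : ((2 ^ k : ℕ) : ℝ) + 2 ≤ 2 ^ (k+1) := by
        have : (2:ℝ) ≤ 2 ^ k := by exact_mod_cast hb2
        push_cast
        rw [pow_succ]; linarith
      have h3 : ((2:ℝ) ^ ((k+1) * (n+3)))⁻¹ ≤ |x - y| := by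
        rw [inv_le_iff_one_le_mul₀ (by positivity), pow_mul]
        refine h2.trans ?_
        gcongr
      have h4 : (((2:ℝ) ^ ((k+1) * (n+3)))⁻¹) ^ (s:ℝ) ≤ |x - y| ^ (s:ℝ) :=
        Real.rpow_le_rpow (by positivity) h3 s.2
      have h5 : (((2:ℝ) ^ ((k+1) * (n+3)))⁻¹) ^ (s:ℝ) = ((2:ℝ) ^ (k * (n+3)))⁻¹ := by
        rw [Real.inv_rpow (by positivity), ← Real.rpow_natCast, ← Real.rpow_mul (by norm_num),
          ← Real.rpow_natCast, hsR]
        congr 2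
        push_cast
        field_simp
      rw [h5] at h4
      refine le_trans (le_of_eq ?_) (mul_le_mul_of_nonneg_left h4 (by positivity))
      push_cast
      rw [← pow_mul, mul_add, pow_add, mul_comm k 3]
      field_simp
    rw [edist_dist, edist_dist, Real.dist_eq, Real.dist_eq,
      ENNReal.ofReal_rpow_of_nonneg (abs_nonneg _) s.coe_nonneg]
    refine (ENNReal.ofReal_le_ofReal hR).trans (le_of_eq ?_)
    rw [ENNReal.ofReal_mul (by positivity)]
    congr 1
    rw [ENNReal.ofReal_pow (by norm_num)]
    simp
  have himg : Icc (0:ℝ) 1 ⊆ (fun β => Real.ofDigits (codeD (2^k) β)) '' cantorE (2^k) := by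
    intro z hz
    obtain ⟨d, _, hd⟩ := Real.ofDigits_SurjOn (b := 2^k) (by omega) hz
    obtain ⟨β, hβ, h0, h1⟩ := exists_base (by omega) d
    exact ⟨β, ⟨hβ, d, h0, h1⟩, by simp only; rw [codeD_eq h1, hd]⟩
  have hone : dimH (Icc (0:ℝ) 1) = 1 := by
    rw [Real.dimH_of_nonempty_interior (by simp)]; simp
  have h := hone.symm.le.trans ((dimH_mono himg).trans (hH.dimH_image_le hs0))
  have hs' : (s:ENNReal) ≠ 0 := by exact_mod_cast hs0.ne'
  rw [ENNReal.le_div_iff_mul_le (Or.inl hs') (Or.inl ENNReal.coe_ne_top), one_mul] at h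
  exact h.trans (dimH_mono (cantorE_subset _))

lemma A0_dim : dimH A0 = 1 := by
  apply le_antisymm
  · exact (dimH_mono (subset_univ _)).trans Real.dimH_univ.le
  · have ht : Tendsto (fun k : ℕ => (((k:NNReal) / (k+1) : NNReal) : ENNReal)) atTop (nhds 1) := by
      rw [← ENNReal.coe_one, ENNReal.tendsto_coe, ← NNReal.tendsto_coe]
      simpa using tendsto_natCast_div_add_atTop (1:ℝ)
    exact le_of_tendsto ht (eventually_atTop.2 ⟨1, fun k hk => dim_lower k hk⟩)

/-- A₀ is dense in (1, ∞) and has Hausdorff dimension 1. -/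
theorem A0_dense_and_dimH : Set.Ioi (1:ℝ) ⊆ closure A0 ∧ dimH A0 = 1 := 
  ⟨A0_dense, A0_dim⟩
end

section
/- Let β be in the set A₀ (bases with bounded zero-runs in the expansion of 1), let M be as in the full-word lemma, and for n ≥ 1, m ≥ M let V_{n,m}^β be the set of x ∈ [0,1) whose β-expansion digit sequence is an infinite concatenation of blocks of the form (ε_1,…,ε_n,0^m) with (ε_1,…,ε_n) β-admissible. Then dim_H V_{n,m}^β ≥ n/(n+m). -/
open Filter MeasureTheory Set

/-- V_{n,m}^β: points of [0,1) whose digit sequence is an infinite concatenation of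
blocks (ε₁,…,εₙ,0^m) with (ε₁,…,εₙ) admissible. -/
def Vnm (β : ℝ) (n m : ℕ) : Set ℝ :=
  {x | x ∈ Set.Ico (0:ℝ) 1 ∧ ∀ i : ℕ,
    IsAdmissibleWord β (List.ofFn fun j : Fin n => betaDigit β x ((n + m) * i + j)) ∧
    ∀ j, n ≤ j → j < n + m → betaDigit β x ((n + m) * i + j) = 0}

lemma bT_mem (β x : ℝ) : betaT β x ∈ Ico (0:ℝ) 1 := by
  unfold betaT
  exact ⟨by linarith [Int.floor_le (β * x)], by linarith [Int.lt_floor_add_one (β * x)]⟩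

lemma bTi_mem (β : ℝ) (k : ℕ) {x : ℝ} (hx : x ∈ Ico (0:ℝ) 1) :
    (betaT β)^[k] x ∈ Ico (0:ℝ) 1 := by
  cases k with
  | zero => simpa using hx
  | succ k => rw [Function.iterate_succ_apply']; exact bT_mem _ _

lemma digit_add (β x : ℝ) (k j : ℕ) :
    betaDigit β x (k + j) = betaDigit β ((betaT β)^[k] x) j := by
  unfold betaDigit
  rw [add_comm k j, Function.iterate_add_apply]

lemma digit_nonneg {β x : ℝ} (hβ : 1 < β) (hx : x ∈ Ico (0:ℝ) 1) (j : ℕ) :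
    0 ≤ betaDigit β x j := by
  unfold betaDigit
  exact Int.floor_nonneg.2 (mul_nonneg (by linarith) (bTi_mem β j hx).1)

/-- value of the first k digits -/
noncomputable def pv (β : ℝ) (k : ℕ) (x : ℝ) : ℝ := x - (β⁻¹) ^ k * (betaT β)^[k] x

lemma pv_succ {β : ℝ} (hβ : 1 < β) (k : ℕ) (x : ℝ) :
    pv β (k + 1) x = pv β k x + (β⁻¹) ^ (k + 1) * betaDigit β x k := by
  unfold pv betaDigit
  rw [Function.iterate_succ_apply']
  have h : β⁻¹ ^ (k + 1) * β = β⁻¹ ^ k := by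
    rw [pow_succ]; field_simp
  generalize (betaT β)^[k] x = u
  simp only [betaT]
  linear_combination (-u) * h

lemma pv_nonneg {β : ℝ} (hβ : 1 < β) (k : ℕ) {x : ℝ} (hx : x ∈ Ico (0:ℝ) 1) :
    0 ≤ pv β k x := by
  induction k with
  | zero => simp [pv]
  | succ k ih =>
    rw [pv_succ hβ]
    have : (0:ℝ) ≤ betaDigit β x k := by exact_mod_cast digit_nonneg hβ hx k
    positivity

lemma pv_le {β : ℝ} (hβ : 1 < β) (k : ℕ) {x : ℝ} (hx : x ∈ Ico (0:ℝ) 1) :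
    pv β k x ≤ x := by
  have := (bTi_mem β k hx).1
  unfold pv
  have : 0 ≤ β⁻¹ ^ k * (betaT β)^[k] x := by positivity
  linarith

lemma pv_congr {β : ℝ} (hβ : 1 < β) (k : ℕ) {x y : ℝ}
    (h : ∀ j < k, betaDigit β x j = betaDigit β y j) : pv β k x = pv β k y := by
  induction k with
  | zero => simp [pv]
  | succ k ih =>
    rw [pv_succ hβ, pv_succ hβ, ih (fun j hj => h j (by omega)), h k (by omega)]

lemma cyl {β : ℝ} (hβ : 1 < β) (k : ℕ) : ∀ {x z : ℝ}, x ∈ Ico (0:ℝ) 1 → 0 ≤ z →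
    z ≤ (betaT β)^[k] x →
    (pv β k x + β⁻¹ ^ k * z) ∈ Ico (0:ℝ) 1 ∧ (betaT β)^[k] (pv β k x + β⁻¹ ^ k * z) = z ∧
    ∀ j < k, betaDigit β (pv β k x + β⁻¹ ^ k * z) j = betaDigit β x j := by
  induction k with
  | zero =>
    intro x z hx h0 hz
    simp [pv] at *
    exact ⟨h0, by linarith⟩
  | succ k ih =>
    intro x z hx h0 hz
    have hp := ih (bT_mem β x) h0 (by simpa [Function.iterate_succ_apply] using hz)
    have hb : (0:ℝ) < β⁻¹ := by positivity
    set p' := pv β k (betaT β x) + β⁻¹ ^ k * z with hp'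
    set p := pv β (k+1) x + β⁻¹ ^ (k+1) * z with hpd
    have e : β * p = ⌊β * x⌋ + p' := by
      rw [hpd, hp']
      unfold pv
      rw [Function.iterate_succ_apply]
      have h : β * β⁻¹ ^ (k + 1) = β⁻¹ ^ k := by
        rw [pow_succ]; field_simp
      have h2 : betaT β x = β * x - ⌊β * x⌋ := rfl
      linear_combination (z - (betaT β)^[k] (betaT β x)) * h - h2
    have fl : ⌊β * p⌋ = ⌊β * x⌋ := by
      rw [e, Int.floor_intCast_add, Int.floor_eq_zero_iff.2 hp.1, add_zero]
    have hT : betaT β p = p' := by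
      simp only [betaT]
      rw [fl, e]; ring
    refine ⟨⟨?_, ?_⟩, ?_, ?_⟩
    · have := pv_nonneg hβ (k+1) hx
      positivity
    · have : β⁻¹ ^ (k+1) * z ≤ β⁻¹ ^ (k+1) * (betaT β)^[k+1] x := by gcongr
      have := hx.2
      rw [hpd]; unfold pv; linarith
    · rw [Function.iterate_succ_apply, hT]; exact hp.2.1
    · intro j hj
      cases j with
      | zero => simpa [betaDigit] using fl
      | succ j =>
        rw [add_comm j 1, digit_add, digit_add]
        simp only [Function.iterate_one]
        rw [hT]; exact hp.2.2 j (by omega)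

lemma zeros {β : ℝ} (hβ : 1 < β) (m : ℕ) {t : ℝ} (ht : t ∈ Ico (0:ℝ) 1) :
    (betaT β)^[m] (β⁻¹ ^ m * t) = t ∧ ∀ j < m, betaDigit β (β⁻¹ ^ m * t) j = 0 := by
  have hb : (0:ℝ) < β⁻¹ := by positivity
  have hb1 : β⁻¹ < 1 := inv_lt_one_of_one_lt₀ hβ
  induction m with
  | zero => simp
  | succ m ih =>
    have h0 : (0:ℝ) ≤ β⁻¹ ^ m * t := mul_nonneg (by positivity) ht.1
    have h1 : β⁻¹ ^ m * t < 1 := by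
      have : β⁻¹ ^ m * t ≤ 1 * t := by
        gcongr
        · exact ht.1
        · exact pow_le_one₀ hb.le hb1.le
      linarith [ht.2]
    have e : β * (β⁻¹ ^ (m+1) * t) = β⁻¹ ^ m * t := by
      rw [pow_succ]; field_simp
    have fl : ⌊β * (β⁻¹ ^ (m+1) * t)⌋ = 0 := by
      rw [e]; exact Int.floor_eq_zero_iff.2 ⟨h0, h1⟩
    have hT : betaT β (β⁻¹ ^ (m+1) * t) = β⁻¹ ^ m * t := by
      simp only [betaT]; rw [fl, e]; simp
    refine ⟨by rw [Function.iterate_succ_apply, hT]; exact ih.1, ?_⟩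
    intro j hj
    cases j with
    | zero => simpa [betaDigit] using fl
    | succ j =>
      rw [add_comm j 1, digit_add]
      simp only [Function.iterate_one]
      rw [hT]; exact ih.2 j (by omega)

lemma zeros_val {β : ℝ} (hβ : 1 < β) (m : ℕ) {x : ℝ}
    (h : ∀ j < m, betaDigit β x j = 0) : x = β⁻¹ ^ m * (betaT β)^[m] x := by
  have : pv β m x = 0 := by
    induction m with
    | zero => simp [pv]
    | succ k ih =>
      rw [pv_succ hβ, ih (fun j hj => h j (by omega)), h k (by omega)]; simp
  unfold pv at this
  linarith

/-- The full word property in dynamical form. -/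
def FullP (β : ℝ) (n m : ℕ) : Prop := ∀ y ∈ Ico (0:ℝ) 1, ∀ t ∈ Ico (0:ℝ) 1,
  (pv β n y + β⁻¹ ^ (n + m) * t) ∈ Ico (0:ℝ) 1 ∧
  (betaT β)^[n + m] (pv β n y + β⁻¹ ^ (n + m) * t) = t ∧
  (∀ j < n, betaDigit β (pv β n y + β⁻¹ ^ (n + m) * t) j = betaDigit β y j) ∧
  (∀ j, n ≤ j → j < n + m → betaDigit β (pv β n y + β⁻¹ ^ (n + m) * t) j = 0)

lemma fullP {β : ℝ} (hβ : 1 < β) (M : ℕ)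
    (hM : ∀ w : List ℤ, IsAdmissibleWord β w → ∀ η : List ℤ, IsAdmissibleWord β η →
      IsAdmissibleWord β (w ++ List.replicate M 0 ++ η))
    (n m : ℕ) (hm : M ≤ m) : FullP β n m := by
  intro y hy t ht
  have hb : (0:ℝ) < β⁻¹ := by positivity
  have hb1 : β⁻¹ < 1 := inv_lt_one_of_one_lt₀ hβ
  have key : ∃ x ∈ Ico (0:ℝ) 1, (∀ j < n, betaDigit β x j = betaDigit β y j) ∧
      β⁻¹ ^ m * t ≤ (betaT β)^[n] x := by
    obtain ⟨K, hK⟩ := exists_pow_lt_of_lt_one (show 0 < (1 - t)/2 by linarith [ht.2]) hb1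
    set t' := (1 + t)/2 with ht'
    have ht'm : t' ∈ Ico (0:ℝ) 1 := ⟨by linarith [ht.1], by linarith [ht.2]⟩
    obtain ⟨x, hx, hd⟩ := hM (List.ofFn fun j : Fin n => betaDigit β y j)
      ⟨y, hy, by simp⟩ (List.ofFn fun j : Fin K => betaDigit β t' j) ⟨t', ht'm, by simp⟩
    have hd1 : ∀ j < n, betaDigit β x j = betaDigit β y j := by
      intro j hj
      rw [← hd j (by simp; omega)]
      simp [List.getElem_append, hj, show j < n + M by omega]
    have hd2 : ∀ j < M, betaDigit β ((betaT β)^[n] x) j = 0 := by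
      intro j hj
      rw [← digit_add, ← hd (n + j) (by simp; omega)]
      simp [List.getElem_append, hj]
    have hd3 : ∀ j < K, betaDigit β ((betaT β)^[n + M] x) j = betaDigit β t' j := by
      intro j hj
      rw [← digit_add, ← hd (n + M + j) (by simp; omega)]
      have a1 : ¬ (n + M + j < n) := by omega
      have a2 : ¬ (n + M + j - n < M) := by omega
      have a3 : n + M + j - n - M = j := by omega
      simp [List.getElem_append, a1, a2, a3]
    refine ⟨x, hx, hd1, ?_⟩
    have e1 := zeros_val hβ M hd2
    rw [← Function.iterate_add_apply, add_comm M n] at e1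
    have e2 := pv_congr hβ K hd3
    have e3 := pv_le hβ K (bTi_mem β (n + M) hx)
    have e4 : t ≤ pv β K t' := by
      unfold pv
      have h1 := (bTi_mem β K ht'm).2
      have : β⁻¹ ^ K * (betaT β)^[K] t' ≤ β⁻¹ ^ K * 1 := by gcongr
      linarith
    rw [e1]
    have h5 : β⁻¹ ^ m ≤ β⁻¹ ^ M := pow_le_pow_of_le_one hb.le hb1.le hm
    have := ht.1
    gcongr
    linarith
  obtain ⟨x, hx, hd, hz⟩ := key
  have c := cyl hβ n hx (mul_nonneg (by positivity) ht.1) hz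
  rw [pv_congr hβ n hd, ← mul_assoc, ← pow_add] at c
  have z := zeros hβ m ht
  refine ⟨c.1, ?_, fun j hj => (c.2.2 j hj).trans (hd j hj), ?_⟩
  · rw [add_comm n m, Function.iterate_add_apply, add_comm m n, c.2.1]; exact z.1
  · intro j h1 h2
    obtain ⟨i, rfl⟩ := Nat.exists_eq_add_of_le h1
    rw [digit_add, c.2.1]; exact z.2 i (by omega)

/-- partial sums -/
noncomputable def pa (β : ℝ) (n m : ℕ) : ℕ → ℝ → ℝ
  | 0, _ => 0
  | k + 1, y => pv β n y + β⁻¹ ^ (n + m) * pa β n m k ((betaT β)^[n] y)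

/-- insertion of zero blocks -/
noncomputable def ps (β : ℝ) (n m : ℕ) (y : ℝ) : ℝ := ⨆ k, pa β n m k y

lemma pa_nonneg {β : ℝ} (hβ : 1 < β) (n m k : ℕ) : ∀ {y : ℝ}, y ∈ Ico (0:ℝ) 1 →
    0 ≤ pa β n m k y := by
  induction k with
  | zero => intro y hy; simp [pa]
  | succ k ih =>
    intro y hy
    have := ih (bTi_mem β n hy)
    have := pv_nonneg hβ n hy
    simp only [pa]; positivity

lemma pa_le {β : ℝ} (hβ : 1 < β) (n m k : ℕ) : ∀ {y : ℝ}, y ∈ Ico (0:ℝ) 1 →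
    pa β n m k y ≤ y := by
  have hb : (0:ℝ) < β⁻¹ := by positivity
  have hb1 : β⁻¹ < 1 := inv_lt_one_of_one_lt₀ hβ
  induction k with
  | zero => intro y hy; simpa [pa] using hy.1
  | succ k ih =>
    intro y hy
    have h := ih (bTi_mem β n hy)
    have h0 := pa_nonneg hβ n m k (bTi_mem β n hy)
    simp only [pa, pv]
    have : β⁻¹ ^ (n + m) * pa β n m k ((betaT β)^[n] y) ≤ β⁻¹ ^ n * (betaT β)^[n] y := by
      have : β⁻¹ ^ (n + m) ≤ β⁻¹ ^ n := pow_le_pow_of_le_one hb.le hb1.le (by omega)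
      gcongr
    linarith

lemma pa_mono {β : ℝ} (hβ : 1 < β) (n m k : ℕ) : ∀ {y : ℝ}, y ∈ Ico (0:ℝ) 1 →
    pa β n m k y ≤ pa β n m (k+1) y := by
  induction k with
  | zero => intro y hy; exact pa_nonneg hβ n m 1 hy
  | succ k ih =>
    intro y hy
    have := ih (bTi_mem β n hy)
    rw [pa, pa]
    gcongr

lemma pa_tendsto {β : ℝ} (hβ : 1 < β) (n m : ℕ) {y : ℝ} (hy : y ∈ Ico (0:ℝ) 1) :
    Tendsto (fun k => pa β n m k y) atTop (nhds (ps β n m y)) := by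
  apply tendsto_atTop_ciSup (monotone_nat_of_le_succ fun k => pa_mono hβ n m k hy)
  exact ⟨y, by rintro _ ⟨k, rfl⟩; exact pa_le hβ n m k hy⟩

lemma ps_mem {β : ℝ} (hβ : 1 < β) (n m : ℕ) {y : ℝ} (hy : y ∈ Ico (0:ℝ) 1) :
    ps β n m y ∈ Ico (0:ℝ) 1 := by
  constructor
  · exact ge_of_tendsto' (pa_tendsto hβ n m hy) fun k => pa_nonneg hβ n m k hy
  · exact (le_of_tendsto' (pa_tendsto hβ n m hy) fun k => pa_le hβ n m k hy).trans_lt hy.2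

lemma ps_eq {β : ℝ} (hβ : 1 < β) (n m : ℕ) {y : ℝ} (hy : y ∈ Ico (0:ℝ) 1) :
    ps β n m y = pv β n y + β⁻¹ ^ (n + m) * ps β n m ((betaT β)^[n] y) := by
  refine tendsto_nhds_unique ((pa_tendsto hβ n m hy).comp (tendsto_add_atTop_nat 1)) ?_
  exact ((pa_tendsto hβ n m (bTi_mem β n hy)).const_mul _).const_add _

lemma ps_eq_pa {β : ℝ} (hβ : 1 < β) (n m k : ℕ) : ∀ {y : ℝ}, y ∈ Ico (0:ℝ) 1 →
    ∃ t ∈ Ico (0:ℝ) 1, ps β n m y = pa β n m k y + (β⁻¹ ^ (n + m)) ^ k * t := by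
  induction k with
  | zero => intro y hy; exact ⟨_, ps_mem hβ n m hy, by simp [pa]⟩
  | succ k ih =>
    intro y hy
    obtain ⟨t, ht, e⟩ := ih (bTi_mem β n hy)
    refine ⟨t, ht, ?_⟩
    rw [ps_eq hβ n m hy, e, pa]; ring

lemma ps_Vnm {β : ℝ} (hβ : 1 < β) (n m : ℕ) (hF : FullP β n m) {y : ℝ}
    (hy : y ∈ Ico (0:ℝ) 1) : ps β n m y ∈ Vnm β n m := by
  have it : ∀ i : ℕ, (betaT β)^[(n + m) * i] (ps β n m y) = ps β n m ((betaT β)^[n * i] y) := by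
    intro i
    induction i with
    | zero => simp
    | succ i ih =>
      rw [Nat.mul_succ, add_comm _ (n + m), Function.iterate_add_apply _ (n + m), ih, Nat.mul_succ,
        add_comm (n * i), Function.iterate_add_apply _ n (n * i), ps_eq hβ n m (bTi_mem β (n*i) hy)]
      exact (hF _ (bTi_mem β (n*i) hy) _ (ps_mem hβ n m (bTi_mem β n (bTi_mem β (n*i) hy)))).2.1
  refine ⟨ps_mem hβ n m hy, fun i => ?_⟩
  have hyi := bTi_mem β (n*i) hy
  have h := hF _ hyi _ (ps_mem hβ n m (bTi_mem β n hyi))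
  rw [← ps_eq hβ n m hyi, ← it] at h
  refine ⟨⟨_, hyi, ?_⟩, ?_⟩
  · intro j hj
    simp only [List.length_ofFn] at hj
    simp only [List.get_ofFn]
    rw [digit_add]
    exact h.2.2.1 j hj
  · intro j h1 h2
    rw [digit_add]; exact h.2.2.2 j h1 h2

lemma pa_mem {β : ℝ} {n m : ℕ} (hF : FullP β n m) (k : ℕ) :
    ∀ {y t : ℝ}, y ∈ Ico (0:ℝ) 1 → t ∈ Ico (0:ℝ) 1 →
    pa β n m k y + (β⁻¹ ^ (n + m)) ^ k * t ∈ Ico (0:ℝ) 1 := by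
  induction k with
  | zero => intro y t hy ht; simpa [pa] using ht
  | succ k ih =>
    intro y t hy ht
    have := (hF y hy _ (ih (bTi_mem β n hy) ht)).1
    convert this using 1
    rw [pa]; ring

lemma sep_s14 {β : ℝ} (hβ : 1 < β) {n m : ℕ} (hF : FullP β n m) (k : ℕ) :
    ∀ {y y' t t' : ℝ}, y ∈ Ico (0:ℝ) 1 → y' ∈ Ico (0:ℝ) 1 → t ∈ Ico (0:ℝ) 1 →
    t' ∈ Ico (0:ℝ) 1 →
    pa β n m k y + (β⁻¹ ^ (n + m)) ^ k * t = pa β n m k y' + (β⁻¹ ^ (n + m)) ^ k * t' →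
    |y - y'| ≤ (β⁻¹ ^ n) ^ k := by
  induction k with
  | zero =>
    intro y y' t t' hy hy' _ _ _
    rw [pow_zero, abs_le]
    constructor <;> linarith [hy.1, hy.2, hy'.1, hy'.2]
  | succ k ih =>
    intro y y' t t' hy hy' ht ht' e
    have hq := pa_mem hF k (bTi_mem β n hy) ht
    have hq' := pa_mem hF k (bTi_mem β n hy') ht'
    have f := hF y hy _ hq
    have f' := hF y' hy' _ hq'
    have e' : pv β n y + β⁻¹ ^ (n + m) *
          (pa β n m k ((betaT β)^[n] y) + (β⁻¹ ^ (n + m)) ^ k * t) =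
        pv β n y' + β⁻¹ ^ (n + m) *
          (pa β n m k ((betaT β)^[n] y') + (β⁻¹ ^ (n + m)) ^ k * t') := by
      rw [pa, pa] at e
      linear_combination e
    rw [e'] at f
    have hpv : pv β n y = pv β n y' :=
      pv_congr hβ n fun j hj => (f.2.2.1 j hj).symm.trans (f'.2.2.1 j hj)
    have hi := ih (bTi_mem β n hy) (bTi_mem β n hy') ht ht' (f.2.1.symm.trans f'.2.1)
    have : y - y' = β⁻¹ ^ n * ((betaT β)^[n] y - (betaT β)^[n] y') := by
      unfold pv at hpv; linarith
    rw [this, abs_mul, abs_of_nonneg (by positivity), pow_succ' (β⁻¹ ^ n)]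
    gcongr

lemma sep' {β : ℝ} (hβ : 1 < β) {n m : ℕ} (hF : FullP β n m) (k : ℕ)
    {y y' : ℝ} (hy : y ∈ Ico (0:ℝ) 1) (hy' : y' ∈ Ico (0:ℝ) 1)
    (h : |pa β n m k y - pa β n m k y'| < (β⁻¹ ^ (n + m)) ^ k) :
    |y - y'| ≤ (β⁻¹ ^ n) ^ k := by
  have hL : 0 < (β⁻¹ ^ (n + m)) ^ k := by positivity
  rw [abs_lt] at h
  rcases le_total (pa β n m k y) (pa β n m k y') with h1 | h1
  · refine sep_s14 hβ hF k hy hy' (t := (pa β n m k y' - pa β n m k y) / (β⁻¹ ^ (n + m)) ^ k)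
      (t' := 0) ⟨div_nonneg (by linarith) hL.le, ?_⟩ (by simp) ?_
    · rw [div_lt_one hL]; linarith
    · rw [mul_div_cancel₀ _ hL.ne']; ring
  · refine sep_s14 hβ hF k hy hy' (t' := (pa β n m k y - pa β n m k y') / (β⁻¹ ^ (n + m)) ^ k)
      (t := 0) (by simp) ⟨div_nonneg (by linarith) hL.le, ?_⟩ ?_
    · rw [div_lt_one hL]; linarith
    · rw [mul_div_cancel₀ _ hL.ne']; ring

lemma meas_pa (β : ℝ) (n m k : ℕ) : Measurable (pa β n m k) := by
  have hT : Measurable (betaT β) := by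
    unfold betaT
    fun_prop
  have hv : Measurable (pv β n) := by
    unfold pv
    exact measurable_id.sub ((hT.iterate n).const_mul _)
  induction k with
  | zero => exact measurable_const
  | succ k ih => exact hv.add ((ih.comp (hT.iterate n)).const_mul _)

lemma meas_ps (β : ℝ) (n m : ℕ) : Measurable (ps β n m) :=
  Measurable.iSup fun k => meas_pa β n m k

lemma vol_bound {β : ℝ} (hβ : 1 < β) {n m : ℕ} (hF : FullP β n m) (k : ℕ) (U : Set ℝ)
    (hU : Metric.ediam U ≤ ENNReal.ofReal ((β⁻¹ ^ (n + m)) ^ k)) :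
    volume (ps β n m ⁻¹' U ∩ Ico 0 1) ≤ 4 * ENNReal.ofReal ((β⁻¹ ^ n) ^ k) := by
  have hL : 0 < (β⁻¹ ^ (n + m)) ^ k := by positivity
  set L := (β⁻¹ ^ (n + m)) ^ k with hLd
  rcases (ps β n m ⁻¹' U ∩ Ico 0 1).eq_empty_or_nonempty with h | ⟨y0, hy0⟩
  · rw [h]; simp
  set S : ℕ → Set ℝ := fun q => {y | y ∈ Ico (0:ℝ) 1 ∧
    pa β n m k y0 + ((q:ℝ) - 2) * L ≤ pa β n m k y ∧
    pa β n m k y < pa β n m k y0 + ((q:ℝ) - 1) * L} with hS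
  have hsub : ps β n m ⁻¹' U ∩ Ico 0 1 ⊆ ⋃ q ∈ Finset.range 4, S q := by
    rintro y ⟨hyU, hy⟩
    obtain ⟨t, ht, e⟩ := ps_eq_pa hβ n m k hy
    obtain ⟨t0, ht0, e0⟩ := ps_eq_pa hβ n m k hy0.2
    have hd : |ps β n m y - ps β n m y0| ≤ L := by
      have h1 := (Metric.edist_le_ediam_of_mem (s := U) hyU hy0.1).trans hU
      rw [edist_dist, ENNReal.ofReal_le_ofReal_iff hL.le, Real.dist_eq] at h1
      exact h1
    rw [← hLd] at e e0
    rw [abs_le] at hd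
    have b1 : L * t < L := by nlinarith [ht.2]
    have b2 : L * t0 < L := by nlinarith [ht0.2]
    have b3 : 0 ≤ L * t := mul_nonneg hL.le ht.1
    have b4 : 0 ≤ L * t0 := mul_nonneg hL.le ht0.1
    simp only [mem_iUnion, Finset.mem_range]
    rcases lt_or_ge (pa β n m k y) (pa β n m k y0 - L) with c1 | c1
    · exact ⟨0, by norm_num, hy, by push_cast; linarith, by push_cast; linarith⟩
    rcases lt_or_ge (pa β n m k y) (pa β n m k y0) with c2 | c2
    · exact ⟨1, by norm_num, hy, by push_cast; linarith, by push_cast; linarith⟩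
    rcases lt_or_ge (pa β n m k y) (pa β n m k y0 + L) with c3 | c3
    · exact ⟨2, by norm_num, hy, by push_cast; linarith, by push_cast; linarith⟩
    · exact ⟨3, by norm_num, hy, by push_cast; linarith, by push_cast; linarith⟩
  have hSq : ∀ q, volume (S q) ≤ ENNReal.ofReal ((β⁻¹ ^ n) ^ k) := by
    intro q
    refine (Real.volume_le_diam _).trans (Metric.ediam_le ?_)
    rintro y ⟨hy, h1, h2⟩ y' ⟨hy', h1', h2'⟩
    rw [edist_dist, Real.dist_eq]
    apply ENNReal.ofReal_le_ofReal
    apply sep' hβ hF k hy hy'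
    rw [abs_lt]
    constructor <;> linarith
  calc _ ≤ volume (⋃ q ∈ Finset.range 4, S q) := measure_mono hsub
    _ ≤ ∑ q ∈ Finset.range 4, volume (S q) := measure_biUnion_finset_le _ _
    _ ≤ ∑ q ∈ Finset.range 4, ENNReal.ofReal ((β⁻¹ ^ n) ^ k) := Finset.sum_le_sum fun q _ => hSq q
    _ = _ := by simp

lemma vol_bound' {β : ℝ} (hβ : 1 < β) {n m : ℕ} (hn : 1 ≤ n) (hF : FullP β n m) (U : Set ℝ)
    (hU : Metric.ediam U ≤ 1) :
    volume (ps β n m ⁻¹' U ∩ Ico 0 1) ≤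
      ENNReal.ofReal (4 * β ^ n) * Metric.ediam U ^ ((n : ℝ) / (n + m)) := by
  have hb : (0:ℝ) < β⁻¹ := by positivity
  have hb1 : β⁻¹ < 1 := inv_lt_one_of_one_lt₀ hβ
  have hfin : Metric.ediam U ≠ ⊤ := ne_top_of_le_ne_top ENNReal.one_ne_top hU
  have h4 : (4 : ENNReal) = ENNReal.ofReal 4 := by simp
  have hd : 0 < (n : ℝ) / (n + m) := by
    have : (0:ℝ) < n := by exact_mod_cast hn
    positivity
  rcases eq_or_ne (Metric.ediam U) 0 with h0 | h0
  · have hz : volume (ps β n m ⁻¹' U ∩ Ico 0 1) ≤ 0 := by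
      have ht : Tendsto (fun k : ℕ => 4 * ENNReal.ofReal ((β⁻¹ ^ n) ^ k)) atTop (nhds 0) := by
        have h1 : Tendsto (fun k : ℕ => 4 * ((β⁻¹ ^ n) ^ k)) atTop (nhds 0) := by
          simpa using (tendsto_pow_atTop_nhds_zero_of_lt_one (r := β⁻¹ ^ n) (by positivity)
            (pow_lt_one₀ hb.le hb1 (by omega))).const_mul 4
        have h2 := ENNReal.tendsto_ofReal h1
        rw [ENNReal.ofReal_zero] at h2
        refine h2.congr fun k => ?_
        rw [h4, ENNReal.ofReal_mul (by norm_num)]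
      refine ge_of_tendsto' ht fun k => vol_bound hβ hF k U ?_
      rw [h0]; exact zero_le
    exact hz.trans zero_le
  · set δ := (Metric.ediam U).toReal with hδ
    have hδ0 : 0 < δ := ENNReal.toReal_pos h0 hfin
    have hδe : Metric.ediam U = ENNReal.ofReal δ := (ENNReal.ofReal_toReal hfin).symm
    have hδ1 : δ ≤ 1 := by
      rw [hδe] at hU; simpa using hU
    obtain ⟨k, hk1, hk2⟩ := exists_nat_pow_near_of_lt_one hδ0 hδ1
      (show 0 < β⁻¹ ^ (n + m) by positivity) (pow_lt_one₀ hb.le hb1 (by omega))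
    have hv := vol_bound hβ hF k U (by rw [hδe]; exact ENNReal.ofReal_le_ofReal hk2)
    refine hv.trans ?_
    rw [hδe, ENNReal.ofReal_rpow_of_pos hδ0, h4, ← ENNReal.ofReal_mul (by norm_num),
      ← ENNReal.ofReal_mul (by positivity)]
    apply ENNReal.ofReal_le_ofReal
    have e : ((β⁻¹ ^ (n + m)) ^ (k + 1)) ^ ((n : ℝ) / (n + m)) = (β⁻¹ ^ n) ^ (k + 1) := by
      rw [← pow_mul, ← pow_mul, ← Real.rpow_natCast, ← Real.rpow_natCast, ← Real.rpow_mul hb.le]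
      congr 1
      have : (0:ℝ) < n := by exact_mod_cast hn
      push_cast
      field_simp
    have hle : (β⁻¹ ^ n) ^ (k + 1) ≤ δ ^ ((n : ℝ) / (n + m)) := by
      rw [← e]
      exact Real.rpow_le_rpow (by positivity) hk1.le hd.le
    have e2 : β ^ n * (β⁻¹ ^ n) ^ (k + 1) = (β⁻¹ ^ n) ^ k := by
      rw [pow_succ, inv_pow]; field_simp
    rw [← e2, mul_assoc]
    gcongr

/-- dim_H V_{n,m}^β ≥ n/(n+m). -/
theorem dimH_Vnm_ge (β : ℝ) (hβ : β ∈ A0) (M : ℕ) (hMpos : 0 < M)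
    (hM : ∀ w : List ℤ, IsAdmissibleWord β w → ∀ η : List ℤ, IsAdmissibleWord β η →
      IsAdmissibleWord β (w ++ List.replicate M 0 ++ η))
    (n m : ℕ) (hn : 1 ≤ n) (hm : M ≤ m) :
    ENNReal.ofReal ((n : ℝ) / (n + m)) ≤ dimH (Vnm β n m) := by
  have h1 : 1 < β := hβ.1
  have hF := fullP h1 M hM n m hm
  have hC : (0:ℝ) < 4 * β ^ n := by positivity
  set C := ENNReal.ofReal (4 * β ^ n) with hCd
  have hC0 : C ≠ 0 := by simpa [hCd] using hC
  have hCt : C ≠ ⊤ := ENNReal.ofReal_ne_top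
  set μ : Measure ℝ := (volume.restrict (Ico (0:ℝ) 1)).map (ps β n m) with hμ
  have hms := meas_ps β n m
  have hle : C⁻¹ • μ ≤ Measure.hausdorffMeasure ((n : ℝ) / (n + m)) := by
    refine Measure.le_hausdorffMeasure _ _ 1 one_pos fun U hU => ?_
    have hb := vol_bound' h1 hn hF (closure U) (by rwa [Metric.ediam_closure])
    rw [Metric.ediam_closure] at hb
    have : μ U ≤ C * Metric.ediam U ^ ((n : ℝ) / (n + m)) := by
      refine (measure_mono subset_closure).trans ?_
      rw [hμ, Measure.map_apply hms isClosed_closure.measurableSet,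
        Measure.restrict_apply (hms isClosed_closure.measurableSet)]
      exact hb
    calc (C⁻¹ • μ) U = C⁻¹ * μ U := by simp
      _ ≤ C⁻¹ * (C * Metric.ediam U ^ ((n : ℝ) / (n + m))) := by gcongr
      _ = _ := by rw [← mul_assoc, ENNReal.inv_mul_cancel hC0 hCt, one_mul]
  have hpos : μ (Vnm β n m) ≠ 0 := by
    have h2 : (1 : ENNReal) ≤ μ (Vnm β n m) := by
      refine le_trans ?_ (Measure.le_map_apply hms.aemeasurable _)
      calc (1 : ENNReal) = (volume.restrict (Ico (0:ℝ) 1)) (Ico 0 1) := by simp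
        _ ≤ _ := measure_mono fun y hy => ps_Vnm h1 n m hF hy
    exact (one_pos.trans_le h2).ne'
  apply le_dimH_of_hausdorffMeasure_ne_zero
  rw [Real.coe_toNNReal _ (by positivity)]
  intro h0
  have h3 := hle (Vnm β n m)
  rw [h0] at h3
  simp [hCt, hpos] at h3
end

section
/- Let β > 1. For any extended real numbers 0 ≤ a ≤ b ≤ ∞, the set E_β(a,b) = {(x,y) ∈ [0,1)² : liminf_n (log W_n^β(x,y))/n = a and limsup_n (log W_n^β(x,y))/n = b} has Hausdorff dimension 2. -/
open Filter MeasureTheory Set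

namespace BW

lemma T_nonneg (β x : ℝ) : 0 ≤ betaT β x := by
  unfold betaT; linarith [Int.floor_le (β * x)]

lemma T_lt (β x : ℝ) : betaT β x < 1 := by
  unfold betaT; linarith [Int.lt_floor_add_one (β * x)]

lemma digit_add (β x : ℝ) (m i : ℕ) :
    betaDigit β ((betaT β)^[m] x) i = betaDigit β x (m + i) := by
  unfold betaDigit
  rw [← Function.iterate_add_apply, add_comm]

lemma T_succ (β x : ℝ) (i : ℕ) :
    β * (betaT β)^[i] x = betaDigit β x i + (betaT β)^[i+1] x := by
  rw [Function.iterate_succ_apply']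
  unfold betaDigit
  conv_rhs => rw [betaT]
  ring

lemma iter_mem {β x : ℝ} (hx : x ∈ Ico (0:ℝ) 1) (i : ℕ) : (betaT β)^[i] x ∈ Ico (0:ℝ) 1 := by
  cases i with
  | zero => simpa using hx
  | succ i => rw [Function.iterate_succ_apply']; exact ⟨T_nonneg _ _, T_lt _ _⟩

/-- a chain of values determines the orbit and digits -/
lemma chain {β : ℝ} {n : ℕ} (v : ℕ → ℝ) (d : ℕ → ℤ) (h : ∀ i < n, β * v i = d i + v (i+1))
    (hv : ∀ i < n, v (i+1) ∈ Ico (0:ℝ) 1) :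
    (∀ i ≤ n, (betaT β)^[i] (v 0) = v i) ∧ ∀ i < n, betaDigit β (v 0) i = d i := by
  have hfl : ∀ i < n, ⌊β * v i⌋ = d i := by
    intro i hi
    rw [Int.floor_eq_iff, h i hi]
    constructor <;> linarith [(hv i hi).1, (hv i hi).2]
  have h1 : ∀ i ≤ n, (betaT β)^[i] (v 0) = v i := by
    intro i
    induction i with
    | zero => simp
    | succ i ih =>
      intro hi
      rw [Function.iterate_succ_apply', ih (by omega), betaT, hfl i (by omega), h i (by omega)]
      ring
  refine ⟨h1, fun i hi => ?_⟩
  rw [betaDigit, h1 i hi.le, hfl i hi]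

/-- two points sharing n digits -/
lemma same_digits {β : ℝ} (_hβ : 1 < β) {x y : ℝ} {n : ℕ}
    (h : ∀ i < n, betaDigit β x i = betaDigit β y i) :
    (betaT β)^[n] x - (betaT β)^[n] y = β ^ n * (x - y) := by
  induction n with
  | zero => simp
  | succ n ih =>
    have h1 := T_succ β x n
    have h2 := T_succ β y n
    rw [h n (by omega)] at h1
    have h3 := ih (fun i hi => h i (by omega))
    rw [pow_succ]
    linear_combination β * h3 - h1 + h2

/-- full cylinder of order n with left endpoint c -/
def Full (β : ℝ) (n : ℕ) (c : ℝ) : Prop :=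
  0 ≤ c ∧ ∀ t ∈ Ico (0:ℝ) 1, c + t / β ^ n < 1 ∧ (betaT β)^[n] (c + t / β ^ n) = t ∧
    ∀ i < n, betaDigit β (c + t / β ^ n) i = betaDigit β c i

lemma Full.T_zero {β c : ℝ} {n : ℕ} (h : Full β n c) : (betaT β)^[n] c = 0 := by
  simpa using (h.2 0 (by simp)).2.1

lemma Full.lt_one {β c : ℝ} {n : ℕ} (h : Full β n c) : c < 1 := by
  simpa using (h.2 0 (by simp)).1

lemma full_zero (β : ℝ) : Full β 0 0 := by
  refine ⟨le_rfl, fun t ht => ?_⟩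
  simpa using ht.2

lemma full_one (β : ℝ) (hβ : 1 < β) : Full β 1 0 := by
  refine ⟨le_rfl, fun t ht => ?_⟩
  have h1 : t / β < 1 := by rw [div_lt_one (by linarith)]; linarith [ht.2]
  have h2 : β * (t / β) = t := by field_simp
  have h3 : ⌊t⌋ = 0 := by rw [Int.floor_eq_zero_iff]; exact ht
  refine ⟨by simpa using h1, by simp [betaT, h2, h3], ?_⟩
  intro i hi
  obtain rfl : i = 0 := by omega
  simp [betaDigit, h2, h3]

lemma Full.comp {β : ℝ} (hβ : 1 < β) {n m : ℕ} {c c' : ℝ} (h : Full β n c) (h' : Full β m c') :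
    Full β (n + m) (c + c' / β ^ n) := by
  have hb : 0 < β := by linarith
  refine ⟨add_nonneg h.1 (div_nonneg h'.1 (by positivity)), fun t ht => ?_⟩
  obtain ⟨a1, a2, a3⟩ := h'.2 t ht
  have e : c + c' / β ^ n + t / β ^ (n + m) = c + (c' + t / β ^ m) / β ^ n := by
    rw [pow_add]; field_simp; ring
  have hm : c' + t / β ^ m ∈ Ico (0:ℝ) 1 :=
    ⟨add_nonneg h'.1 (div_nonneg ht.1 (by positivity)), a1⟩
  obtain ⟨b1, b2, b3⟩ := h.2 _ hm
  obtain ⟨d1, d2, d3⟩ := h.2 c' ⟨h'.1, h'.lt_one⟩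
  rw [e]
  refine ⟨b1, by rw [add_comm n m, Function.iterate_add_apply, b2, a2], fun i hi => ?_⟩
  by_cases hin : i < n
  · rw [b3 i hin, d3 i hin]
  · obtain ⟨j, rfl⟩ := Nat.exists_eq_add_of_le (not_lt.1 hin)
    rw [← digit_add, ← digit_add, b2, d2]
    exact a3 j (by omega)

lemma full_zero_n (β : ℝ) (hβ : 1 < β) (n : ℕ) : Full β n 0 := by
  induction n with
  | zero => exact full_zero β
  | succ n ih => simpa using ih.comp hβ (full_one β hβ)

lemma Full.mono {β : ℝ} (hβ : 1 < β) {n m : ℕ} (hnm : n ≤ m) {c : ℝ} (h : Full β n c) :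
    Full β m c := by
  obtain ⟨k, rfl⟩ := Nat.exists_eq_add_of_le hnm
  simpa using h.comp hβ (full_zero_n β hβ k)

lemma Full.le {β : ℝ} (hβ : 1 < β) {n : ℕ} {c : ℝ} (h : Full β n c) : c + 1 / β ^ n ≤ 1 := by
  have hb : 0 < β := by linarith
  by_contra! hc
  have hp : 0 < β ^ n := by positivity
  have := (h.2 (β ^ n * (1 - c)) ⟨mul_nonneg hp.le (by linarith [h.lt_one]), by
    have : 1 - c < 1 / β ^ n := by linarith
    rw [lt_div_iff₀ hp] at this; linarith⟩).1
  field_simp at this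
  linarith

lemma Full.sep {β : ℝ} (hβ : 1 < β) {n : ℕ} {c c' : ℝ} (h : Full β n c) (h' : Full β n c')
    (hlt : c < c') : c + 1 / β ^ n ≤ c' := by
  have hb : 0 < β := by linarith
  by_contra! hc
  have hp : 0 < β ^ n := by positivity
  have := (h.2 (β ^ n * (c' - c)) ⟨mul_nonneg hp.le (by linarith), by
    have : c' - c < 1 / β ^ n := by linarith
    rw [lt_div_iff₀ hp] at this; linarith⟩).2.1
  have e : c + β ^ n * (c' - c) / β ^ n = c' := by field_simp; ring
  rw [e, h'.T_zero] at this
  have : 0 < β ^ n * (c' - c) := mul_pos hp (by linarith)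
  linarith

lemma digit_nonneg {β : ℝ} (hβ : 1 < β) {x : ℝ} (hx : 0 ≤ x) (i : ℕ) : 0 ≤ betaDigit β x i := by
  unfold betaDigit
  apply Int.floor_nonneg.2
  apply mul_nonneg (by linarith)
  cases i with
  | zero => simpa using hx
  | succ i => rw [Function.iterate_succ_apply']; exact T_nonneg _ _

lemma iter_one_le {β : ℝ} (i : ℕ) : (betaT β)^[i] 1 ≤ 1 := by
  cases i with
  | zero => simp
  | succ i => rw [Function.iterate_succ_apply']; exact (T_lt _ _).le

lemma full_of_lt {β : ℝ} (hβ : 1 < β) {s : ℝ} (hs : s ∈ Ico (0:ℝ) 1) {m : ℕ}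
    (hd : ∀ i < m, betaDigit β s i = betaDigit β 1 i) (hm : betaDigit β s m < betaDigit β 1 m) :
    Full β (m+1) (s - (betaT β)^[m+1] s / β ^ (m+1)) := by
  have hb : 0 < β := by linarith
  have key : ∀ t ∈ Ico (0:ℝ) 1, s - (betaT β)^[m+1] s / β ^ (m+1) + t / β ^ (m+1) ∈ Ico (0:ℝ) 1 ∧
      (betaT β)^[m+1] (s - (betaT β)^[m+1] s / β ^ (m+1) + t / β ^ (m+1)) = t ∧
      ∀ i < m+1, betaDigit β (s - (betaT β)^[m+1] s / β ^ (m+1) + t / β ^ (m+1)) i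
        = betaDigit β s i := by
    intro t ht
    set v : ℕ → ℝ := fun i => (betaT β)^[i] s + (t - (betaT β)^[m+1] s) * β ^ i / β ^ (m+1) with hv
    have hrec : ∀ i, β * v i = betaDigit β s i + v (i+1) := by
      intro i
      simp only [hv]
      have := T_succ β s i
      rw [mul_add, this, pow_succ β i]; ring
    have hvm : v (m+1) = t := by
      simp only [hv]; field_simp; ring
    have hnn : ∀ k ≤ m+1, 0 ≤ v (m+1-k) := by
      intro k
      induction k with
      | zero => intro _; simp only [Nat.sub_zero]; rw [hvm]; exact ht.1
      | succ k ih =>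
        intro hk
        have h1 := ih (by omega)
        have h2 := hrec (m+1-(k+1))
        rw [show m+1-(k+1)+1 = m+1-k by omega] at h2
        have h3 : (0:ℝ) ≤ betaDigit β s (m+1-(k+1)) := by exact_mod_cast digit_nonneg hβ hs.1 _
        by_contra! hneg
        nlinarith
    have hlt : ∀ k ≤ m, v (m-k) < (betaT β)^[m-k] 1 := by
      intro k
      induction k with
      | zero =>
        intro _
        simp only [Nat.sub_zero]
        have h2 := hrec m
        rw [hvm] at h2
        have h3 := T_succ β 1 m
        have h4 : (betaDigit β s m : ℝ) + 1 ≤ betaDigit β 1 m := by exact_mod_cast hm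
        have h5 := ht.2
        have h6 : 0 ≤ (betaT β)^[m+1] 1 := by
          rw [Function.iterate_succ_apply']; exact T_nonneg _ _
        by_contra! hneg
        nlinarith
      | succ k ih =>
        intro hk
        have h1 := ih (by omega)
        have h2 := hrec (m-(k+1))
        have h3 := T_succ β 1 (m-(k+1))
        rw [show m-(k+1)+1 = m-k by omega] at h2 h3
        rw [hd _ (by omega)] at h2
        by_contra! hneg
        nlinarith
    have hmem : ∀ i ≤ m+1, v i ∈ Ico (0:ℝ) 1 := by
      intro i hi
      refine ⟨?_, ?_⟩
      · have := hnn (m+1-i) (by omega)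
        rwa [show m+1-(m+1-i) = i by omega] at this
      · by_cases him : i = m+1
        · rw [him, hvm]; exact ht.2
        · have := hlt (m-i) (by omega)
          rw [show m-(m-i) = i by omega] at this
          linarith [iter_one_le (β := β) i]
    have hv0 : v 0 = s - (betaT β)^[m+1] s / β ^ (m+1) + t / β ^ (m+1) := by
      simp only [hv, Function.iterate_zero, id, pow_zero]; ring
    obtain ⟨c1, c2⟩ := chain (n := m+1) v (betaDigit β s) (fun i _ => hrec i)
      (fun i hi => hmem _ (by omega))
    rw [hv0] at c1 c2
    refine ⟨?_, ?_, c2⟩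
    · rw [← hv0]; exact hmem 0 (by omega)
    · rw [c1 _ le_rfl, hvm]
  have h0 := key 0 (by simp)
  simp only [zero_div, add_zero] at h0
  refine ⟨h0.1.1, fun t ht => ?_⟩
  obtain ⟨k1, k2, k3⟩ := key t ht
  refine ⟨k1.2, k2, fun i hi => ?_⟩
  rw [k3 i hi, h0.2.2 i hi]

lemma cover {β : ℝ} (hβ : 1 < β) {x : ℝ} (hx : x ∈ Ico (0:ℝ) 1) (n : ℕ) :
    ∃ j m c s, j + m = n ∧ Full β j c ∧ s ∈ Ico (0:ℝ) 1 ∧ x = c + s / β ^ j ∧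
      ∀ i < m, betaDigit β s i = betaDigit β 1 i := by
  have hb : 0 < β := by linarith
  induction n with
  | zero => exact ⟨0, 0, 0, x, rfl, full_zero β, hx, by simp, by simp⟩
  | succ n ih =>
    obtain ⟨j, m, c, s, hjm, hF, hs, hxe, hd⟩ := ih
    have hle : betaDigit β s m ≤ betaDigit β 1 m := by
      unfold betaDigit
      apply Int.floor_le_floor
      have := same_digits hβ hd
      have h2 : β ^ m * (s - 1) ≤ 0 :=
        mul_nonpos_of_nonneg_of_nonpos (by positivity) (by linarith [hs.2])
      apply mul_le_mul_of_nonneg_left _ hb.le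
      linarith
    rcases hle.lt_or_eq with hlt | heq
    · refine ⟨j + (m+1), 0, _, (betaT β)^[m+1] s, by omega, hF.comp hβ (full_of_lt hβ hs hd hlt),
        iter_mem hs _, ?_, by simp⟩
      rw [hxe, pow_add]; field_simp; ring
    · refine ⟨j, m+1, c, s, by omega, hF, hs, hxe, fun i hi => ?_⟩
      by_cases him : i = m
      · rw [him, heq]
      · exact hd i (by omega)

lemma full_finite {β : ℝ} (hβ : 1 < β) (n : ℕ) : {c | Full β n c}.Finite := by
  have hb : 0 < β := by linarith
  have hp : 0 < β ^ n := by positivity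
  apply Set.Finite.of_finite_image (f := fun c => ⌊c * β ^ n⌋)
  · apply (Set.finite_Icc (0:ℤ) ⌊β ^ n⌋).subset
    rintro _ ⟨c, hc, rfl⟩
    refine ⟨Int.floor_nonneg.2 (mul_nonneg hc.1 hp.le), Int.floor_le_floor ?_⟩
    nlinarith [hc.lt_one]
  · have key : ∀ c c', Full β n c → Full β n c' → ⌊c * β ^ n⌋ = ⌊c' * β ^ n⌋ → ¬ c < c' := by
      intro c c' hc hc' he hlt
      have := hc.sep hβ hc' hlt
      have h2 : c * β ^ n + 1 ≤ c' * β ^ n := by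
        have := mul_le_mul_of_nonneg_right this hp.le
        rw [add_mul, one_div, inv_mul_cancel₀ hp.ne'] at this
        exact this
      have h3 := Int.floor_le_floor h2
      rw [Int.floor_add_one] at h3
      omega
    intro c hc c' hc' he
    exact le_antisymm (not_lt.1 (key _ _ hc' hc he.symm)) (not_lt.1 (key _ _ hc hc' he))

lemma full_count {β : ℝ} (hβ : 1 < β) (n : ℕ) :
    β ^ n ≤ (n + 1) * ((full_finite hβ n).toFinset.card : ℝ) := by
  have hb : 0 < β := by linarith
  have hp : 0 < β ^ n := by positivity
  set S := (full_finite hβ n).toFinset with hS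
  have hsub : Ico (0:ℝ) 1 ⊆ ⋃ p ∈ (Finset.range (n+1) ×ˢ S),
      Icc (p.2 + 1 / β ^ p.1 - 1 / β ^ n) (p.2 + 1 / β ^ p.1) := by
    intro x hx
    obtain ⟨j, m, c, s, hjm, hF, hs, hxe, hd⟩ := cover hβ hx n
    simp only [mem_iUnion]
    refine ⟨(j, c), ?_, ?_⟩
    · simp only [Finset.mem_product, Finset.mem_range, hS, Set.Finite.mem_toFinset, mem_ofPred_eq]
      exact ⟨by omega, hF.mono hβ (by omega)⟩
    · have h1 := same_digits hβ hd
      have h2 := iter_one_le (β := β) m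
      have h3 := (iter_mem (β := β) hs m).1
      have h4 : 0 < β ^ j := by positivity
      have h5 : 0 < β ^ m := by positivity
      have h6 : 1 - s ≤ 1 / β ^ m := by rw [le_div_iff₀ h5]; nlinarith
      have h7 : s / β ^ j ≤ 1 / β ^ j := by
        apply div_le_div_of_nonneg_right hs.2.le h4.le
      have h8 : (1 - s) / β ^ j ≤ 1 / β ^ n := by
        rw [← hjm, pow_add]
        calc (1 - s) / β ^ j ≤ (1 / β ^ m) / β ^ j := div_le_div_of_nonneg_right h6 h4.le
          _ = _ := by field_simp
      rw [sub_div] at h8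
      constructor <;> simp only <;> rw [hxe] <;> linarith
  have h1 := (measure_mono (μ := volume) hsub).trans (measure_biUnion_finset_le _ _)
  simp only [Real.volume_Ico, Real.volume_Icc, sub_zero, ENNReal.ofReal_one] at h1
  have h2 : ∀ p : ℕ × ℝ, p.2 + 1 / β ^ p.1 - (p.2 + 1 / β ^ p.1 - 1 / β ^ n) = 1 / β ^ n := by
    intro p; ring
  simp only [h2, Finset.sum_const, Finset.card_product, Finset.card_range, nsmul_eq_mul] at h1
  rw [← ENNReal.ofReal_natCast, ← ENNReal.ofReal_mul (by positivity), ENNReal.one_le_ofReal] at h1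
  push_cast at h1
  rw [mul_one_div, le_div_iff₀ hp] at h1
  linarith

/-- letters -/
lemma letters {β : ℝ} (hβ : 1 < β) {τ : ℝ} (hτ : τ < 1) : ∃ N M : ℕ, 1 ≤ N ∧ 2 ≤ M ∧
    β ^ ((N:ℝ) * τ) ≤ M ∧ ∃ e : Fin M → ℝ, Function.Injective e ∧
      ∀ k, Full β N (e k) ∧ 0 < e k ∧ e k ≤ 1 - 2 / β ^ N := by
  have hb : 0 < β := by linarith
  -- choose N
  have hlim : Tendsto (fun n : ℕ => (n + 1 : ℝ) * (β ^ ((n:ℝ) * τ) + 5) / β ^ n) atTop (nhds 0) := by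
    have hρ : β ^ (τ - 1) < 1 := Real.rpow_lt_one_of_one_lt_of_neg hβ (by linarith)
    have hρ0 : 0 < β ^ (τ - 1) := by positivity
    have hi : β⁻¹ < 1 := inv_lt_one_of_one_lt₀ hβ
    have hi0 : 0 < β⁻¹ := by positivity
    have l1 := (tendsto_self_mul_const_pow_of_lt_one hρ0.le hρ).add
      (tendsto_pow_atTop_nhds_zero_of_lt_one hρ0.le hρ)
    have l2 := ((tendsto_self_mul_const_pow_of_lt_one hi0.le hi).add
      (tendsto_pow_atTop_nhds_zero_of_lt_one hi0.le hi)).const_mul 5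
    have l3 := l1.add l2
    simp only [add_zero, mul_zero] at l3
    refine l3.congr fun n => ?_
    have e1 : (β ^ (τ - 1)) ^ n = β ^ ((n:ℝ) * τ) / β ^ n := by
      rw [← Real.rpow_mul_natCast hb.le, ← Real.rpow_natCast β n, ← Real.rpow_sub hb]
      congr 1; ring
    rw [e1, inv_pow]
    field_simp
    try ring
  obtain ⟨N, hN1, hN2⟩ := ((eventually_ge_atTop 1).and
    (hlim.eventually (gt_mem_nhds (zero_lt_one)))).exists
  have hp : 0 < β ^ N := by positivity
  rw [div_lt_one hp] at hN2
  have hc := full_count hβ N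
  set S := (full_finite hβ N).toFinset with hS
  have hSm : ∀ c, c ∈ S ↔ Full β N c := by simp [hS]
  have hcard : β ^ ((N:ℝ) * τ) + 5 ≤ S.card := by
    have : (N + 1 : ℝ) * (β ^ ((N:ℝ) * τ) + 5) ≤ (N+1) * S.card := by linarith
    exact le_of_mul_le_mul_left this (by positivity)
  have hne : S.Nonempty := ⟨0, (hSm 0).2 (full_zero_n β hβ N)⟩
  set B := (S.erase 0).erase (S.max' hne) with hB
  have hBc : S.card ≤ B.card + 2 := by
    have h1 := Finset.pred_card_le_card_erase (s := S) (a := 0)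
    have h2 := Finset.pred_card_le_card_erase (s := S.erase 0) (a := S.max' hne)
    rw [← hB] at h2
    omega
  have hBc' : (S.card : ℝ) ≤ B.card + 2 := by exact_mod_cast hBc
  have hpos : 0 < β ^ ((N:ℝ) * τ) := by positivity
  refine ⟨N, B.card, hN1, ?_, by linarith, fun k => (B.equivFin.symm k : ℝ), ?_, fun k => ?_⟩
  · have : (2:ℝ) ≤ B.card := by linarith
    exact_mod_cast this
  · intro i j hij
    exact B.equivFin.symm.injective (Subtype.ext hij)
  · have hm : (B.equivFin.symm k : ℝ) ∈ B := (B.equivFin.symm k).2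
    change Full β N (B.equivFin.symm k : ℝ) ∧ 0 < (B.equivFin.symm k : ℝ) ∧
      (B.equivFin.symm k : ℝ) ≤ 1 - 2 / β ^ N
    generalize (B.equivFin.symm k : ℝ) = c at hm
    simp only [hB, Finset.mem_erase] at hm
    obtain ⟨m1, m2, m3⟩ := hm
    have hF := (hSm c).1 m3
    refine ⟨hF, lt_of_le_of_ne hF.1 (Ne.symm m2), ?_⟩
    have hF' := (hSm _).1 (S.max'_mem hne)
    have h1 := hF.sep hβ hF' (lt_of_le_of_ne (S.le_max' c m3) m1)
    have h2 := hF'.le hβ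
    have : 2 / β ^ N = 1 / β ^ N + 1 / β ^ N := by ring
    linarith

end BW


namespace BW

def Letter (β : ℝ) (N : ℕ) (c : ℝ) : Prop := Full β N c ∧ c ≤ 1 - 2 / β ^ N

noncomputable def code (β : ℝ) (N : ℕ) (ω : ℕ → ℝ) : ℝ := ∑' i, ω i * (1 / β ^ N) ^ i

section
variable {β : ℝ} {N : ℕ} (hβ : 1 < β) (hN : 1 ≤ N)

lemma q_lt (hβ : 1 < β) (hN : 1 ≤ N) : 1 / β ^ N < 1 := by
  have : 1 < β ^ N := one_lt_pow₀ hβ (by omega)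
  rw [div_lt_one (by linarith)]; exact this

lemma q_pos (hβ : 1 < β) : 0 < 1 / β ^ N := by
  have : 0 < β := by linarith
  positivity

lemma code_summable (hβ : 1 < β) (hN : 1 ≤ N) {ω : ℕ → ℝ} (h : ∀ i, Letter β N (ω i)) :
    Summable (fun i => ω i * (1 / β ^ N) ^ i) := by
  have hq := q_pos (N := N) hβ
  refine Summable.of_nonneg_of_le (fun i => mul_nonneg (h i).1.1 (by positivity)) (fun i => ?_)
    (summable_geometric_of_lt_one hq.le (q_lt hβ hN))
  have : 0 < (1 / β ^ N) ^ i := by positivity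
  nlinarith [(h i).1.lt_one]

lemma code_succ (hβ : 1 < β) (hN : 1 ≤ N) {ω : ℕ → ℝ} (h : ∀ i, Letter β N (ω i)) :
    code β N ω = ω 0 + code β N (fun i => ω (i+1)) / β ^ N := by
  have hs := code_summable hβ hN h
  rw [code, hs.tsum_eq_zero_add, code, ← tsum_div_const]
  simp only [pow_zero, mul_one]
  congr 1
  apply tsum_congr
  intro i
  rw [pow_succ]; ring

lemma code_succ' (hβ : 1 < β) (hN : 1 ≤ N) {ω : ℕ → ℝ} (h : ∀ i, Letter β N (ω i)) :
    code β N ω = ω 0 + code β N (fun i => ω (i+1)) * (1 / β ^ N) := by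
  rw [code_succ hβ hN h]; ring

lemma code_mem (hβ : 1 < β) (hN : 1 ≤ N) {ω : ℕ → ℝ} (h : ∀ i, Letter β N (ω i)) :
    0 ≤ code β N ω ∧ code β N ω ≤ 1 - 1 / β ^ N := by
  have hq := q_pos (N := N) hβ
  have hq1 := q_lt hβ hN
  have hs := code_summable hβ hN h
  constructor
  · exact tsum_nonneg (fun i => mul_nonneg (h i).1.1 (by positivity))
  · have h1 : code β N ω ≤ ∑' i, (1 - 2 / β ^ N) * (1 / β ^ N) ^ i := by
      refine hs.tsum_le_tsum (fun i => ?_) ((summable_geometric_of_lt_one hq.le hq1).mul_left _)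
      exact mul_le_mul_of_nonneg_right (h i).2 (by positivity)
    rw [tsum_mul_left, tsum_geometric_of_lt_one hq.le hq1, ← div_eq_mul_inv] at h1
    refine h1.trans ?_
    rw [div_le_iff₀ (by linarith)]
    have : 2 / β ^ N = 2 * (1 / β ^ N) := by ring
    rw [this]
    nlinarith

lemma code_mem' (hβ : 1 < β) (hN : 1 ≤ N) {ω : ℕ → ℝ} (h : ∀ i, Letter β N (ω i)) :
    code β N ω ∈ Ico (0:ℝ) 1 := by
  have := code_mem hβ hN h
  have hq := q_pos (N := N) hβ
  exact ⟨this.1, by linarith⟩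

lemma code_T (hβ : 1 < β) (hN : 1 ≤ N) (i : ℕ) {ω : ℕ → ℝ} (h : ∀ i, Letter β N (ω i)) :
    (betaT β)^[N * i] (code β N ω) = code β N (fun j => ω (i + j)) := by
  induction i generalizing ω with
  | zero => simp
  | succ i ih =>
    have h' : ∀ j, Letter β N (ω (j+1)) := fun j => h (j+1)
    have := ((h 0).1.2 _ (code_mem' hβ hN h')).2.1
    rw [← code_succ hβ hN h] at this
    rw [mul_add, mul_one, Function.iterate_add_apply, this, ih h']
    congr 1; funext j; congr 1; omega

lemma code_digit (hβ : 1 < β) (hN : 1 ≤ N) {ω : ℕ → ℝ} (h : ∀ i, Letter β N (ω i)) (i j : ℕ)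
    (hj : j < N) : betaDigit β (code β N ω) (N * i + j) = betaDigit β (ω i) j := by
  rw [← digit_add, code_T hβ hN i h]
  have h' : ∀ j, Letter β N (ω (i + j)) := fun j => h _
  have h'' : ∀ j, Letter β N (ω (i + (j + 1))) := fun j => h _
  rw [code_succ hβ hN h']
  exact ((h' 0).1.2 _ (code_mem' hβ hN h'')).2.2 j hj

lemma code_sep0 (hβ : 1 < β) (hN : 1 ≤ N) {ω ω' : ℕ → ℝ} (h : ∀ i, Letter β N (ω i))
    (h' : ∀ i, Letter β N (ω' i)) (hlt : ω 0 < ω' 0) :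
    (1 / β ^ N) ^ 2 ≤ code β N ω' - code β N ω := by
  have hq := q_pos (N := N) hβ
  have h1 := (h 0).1.sep hβ (h' 0).1 hlt
  rw [code_succ' hβ hN h, code_succ' hβ hN h']
  have h2 := code_mem hβ hN (fun i => h (i+1))
  have h3 := code_mem hβ hN (fun i => h' (i+1))
  have h4 := mul_le_mul_of_nonneg_right h2.2 hq.le
  have h5 := mul_nonneg h3.1 hq.le
  nlinarith

lemma code_sep (hβ : 1 < β) (hN : 1 ≤ N) (i : ℕ) {ω ω' : ℕ → ℝ} (h : ∀ i, Letter β N (ω i))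
    (h' : ∀ i, Letter β N (ω' i)) (heq : ∀ j < i, ω j = ω' j) (hne : ω i ≠ ω' i) :
    (1 / β ^ N) ^ (i + 2) ≤ |code β N ω - code β N ω'| := by
  have hq := q_pos (N := N) hβ
  induction i generalizing ω ω' with
  | zero =>
    rcases lt_or_gt_of_ne hne with hlt | hlt
    · rw [abs_sub_comm]
      exact (code_sep0 hβ hN h h' hlt).trans (le_abs_self _)
    · exact (code_sep0 hβ hN h' h hlt).trans (le_abs_self _)
  | succ i ih =>
    have := ih (fun j => h (j+1)) (fun j => h' (j+1)) (fun j hj => heq (j+1) (by omega)) hne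
    rw [code_succ' hβ hN h, code_succ' hβ hN h', heq 0 (by omega), add_sub_add_left_eq_sub,
      ← sub_mul, abs_mul, abs_of_pos hq, show i + 1 + 2 = (i + 2) + 1 by ring, pow_succ]
    exact mul_le_mul_of_nonneg_right this hq.le

lemma letter_digits (hβ : 1 < β) {c c' : ℝ} (h : Letter β N c) (h' : Letter β N c')
    (hd : ∀ j < N, betaDigit β c j = betaDigit β c' j) : c = c' := by
  have := same_digits hβ hd
  rw [h.1.T_zero, h'.1.T_zero] at this
  have hb : 0 < β := by linarith
  have hp : β ^ N ≠ 0 := by positivity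
  have := mul_eq_zero.1 (this.symm.trans (sub_self 0))
  rcases this with h | h
  · exact absurd h hp
  · linarith

end

lemma digit_zero (β : ℝ) (j : ℕ) : betaDigit β 0 j = 0 := by
  have : (betaT β)^[j] 0 = 0 := by
    apply Function.iterate_fixed; simp [betaT]
  simp [betaDigit, this]

/-- combinatorial matching lemma -/
lemma match_lemma {N : ℕ} (hN : 1 ≤ N) {D : ℝ → ℕ → ℤ} {ω η : ℕ → ℝ} {X Y : ℕ → ℤ}
    (hX : ∀ i j, j < N → X (N * i + j) = D (ω i) j)
    (hY : ∀ i j, j < N → Y (N * i + j) = D (η i) j)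
    (hD0 : ∀ j, D 0 j = 0)
    (hω : ∀ i, ω i ≠ 0 → ∃ j < N, D (ω i) j ≠ 0)
    (hη0 : η 0 = 0) (hη1 : η 1 = 0) (hη2 : ∃ j < N, D (η 2) j ≠ 0)
    {L P : ℕ → ℕ} (hL : ∀ k, 3 ≤ L k)
    (hins : ∀ k l, l < L k → ω (P k + l) = η l)
    (hbrk : ∀ k, ∃ j < N, D (ω (P k + L k)) j ≠ D (η (L k)) j)
    (hzero : ∀ i, ω i = 0 → ∃ k, i = P k ∨ i = P k + 1)
    {m n : ℕ} (hn : 3 * N ≤ n) (hm : ∀ i < n, X (m + i) = Y i) :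
    ∃ k, m = N * P k ∧ n < N * (L k + 1) := by
  classical
  obtain ⟨z, ⟨hzN, hz⟩, hzmin⟩ : ∃ z, (z < N ∧ D (η 2) z ≠ 0) ∧ ∀ j < z, D (η 2) j = 0 := by
    refine ⟨Nat.find hη2, Nat.find_spec hη2, fun j hj => ?_⟩
    have := Nat.find_min hη2 hj
    by_contra hne
    exact this ⟨by have := (Nat.find_spec hη2).1; omega, hne⟩
  have hYZ : Y (2 * N + z) ≠ 0 := by
    rw [mul_comm, hY 2 z hzN]; exact hz
  have hY0 : ∀ i < 2 * N + z, Y i = 0 := by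
    intro i hi
    by_cases h1 : i < N
    · have := hY 0 i h1
      rw [hη0, hD0] at this; simpa using this
    · by_cases h2 : i < 2 * N
      · have := hY 1 (i - N) (by omega)
        rw [hη1, hD0, show N * 1 + (i - N) = i by omega] at this; exact this
      · have := hY 2 (i - 2 * N) (by omega)
        rw [hzmin _ (by omega), show N * 2 + (i - 2 * N) = i by omega] at this; exact this
  have hins' : ∀ k i, i < N * L k → X (N * P k + i) = Y i := by
    intro k i hi
    have hdm := Nat.div_add_mod i N
    have hmod := Nat.mod_lt i (show N > 0 by omega)
    have hdiv : i / N < L k := Nat.div_lt_of_lt_mul hi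
    have e1 := hX (P k + i / N) (i % N) hmod
    have e2 := hY (i / N) (i % N) hmod
    rw [hins k _ hdiv, ← e2, hdm, mul_add, add_assoc, hdm] at e1
    exact e1
  -- aligned block
  set i0 := (m + (N - 1)) / N with hi0
  have hA : m ≤ N * i0 ∧ N * i0 < m + N := by
    have hdm := Nat.div_add_mod (m + (N-1)) N
    have hmod := Nat.mod_lt (m + (N-1)) (show N > 0 by omega)
    rw [← hi0] at hdm
    omega
  have hz0 : ω i0 = 0 := by
    by_contra hne
    obtain ⟨j, hj, hDj⟩ := hω i0 hne
    apply hDj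
    rw [← hX i0 j hj]
    have := hm (N * i0 + j - m) (by omega)
    rw [hY0 _ (by omega), show m + (N * i0 + j - m) = N * i0 + j by omega] at this
    exact this
  obtain ⟨k, hk⟩ := hzero i0 hz0
  have hLk : 3 * N ≤ N * L k := by rw [mul_comm]; exact Nat.mul_le_mul_left _ (hL k)
  have hNP : N * P k ≤ N * i0 ∧ N * i0 ≤ N * P k + N := by
    rcases hk with h | h <;> rw [h]
    · omega
    · rw [mul_add]; omega
  have hXP0 : ∀ i < 2 * N + z, X (N * P k + i) = 0 := fun i hi => by
    rw [hins' k i (by omega), hY0 i hi]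
  have hXPZ : X (N * P k + (2 * N + z)) ≠ 0 := by rw [hins' k _ (by omega)]; exact hYZ
  have hXm0 : ∀ i < 2 * N + z, X (m + i) = 0 := fun i hi => by
    rw [hm i (by omega), hY0 i hi]
  have hXmZ : X (m + (2 * N + z)) ≠ 0 := by rw [hm _ (by omega)]; exact hYZ
  have hge : N * P k ≤ m := by
    by_contra! hlt
    apply hXmZ
    have := hXP0 (m + (2 * N + z) - N * P k) (by omega)
    rwa [show N * P k + (m + (2 * N + z) - N * P k) = m + (2 * N + z) by omega] at this
  have hle : m ≤ N * P k := by
    by_contra! hlt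
    apply hXPZ
    have := hXm0 (N * P k + (2 * N + z) - m) (by omega)
    rwa [show m + (N * P k + (2 * N + z) - m) = N * P k + (2 * N + z) by omega] at this
  have hmk : m = N * P k := le_antisymm hle hge
  refine ⟨k, hmk, ?_⟩
  by_contra! hnk
  obtain ⟨j, hj, hne⟩ := hbrk k
  apply hne
  rw [mul_add] at hnk
  have := hm (N * L k + j) (by omega)
  rw [hY _ _ hj, hmk, ← add_assoc, ← mul_add, hX _ _ hj] at this
  exact this

end BW


namespace BW

noncomputable def nextP (N : ℕ) (bk : ℝ) (L : ℕ) : ℕ :=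
  ⌈((L:ℝ) + 2) ^ 4 * Real.exp (bk * (N * (L + 2)))⌉₊

noncomputable def nextL (N : ℕ) (ak : ℝ) (L P : ℕ) : ℕ :=
  max (L + 1) (⌊Real.log P / (N * ak)⌋₊ - 1)

noncomputable def LP (N : ℕ) (a b : ℕ → ℝ) : ℕ → ℕ × ℕ
  | 0 => (3, 1)
  | k + 1 => (nextL N (a (k+1)) (LP N a b k).1 (nextP N (b k) (LP N a b k).1),
      nextP N (b k) (LP N a b k).1)

lemma seqs {N : ℕ} (hN : 1 ≤ N) {a b : ℕ → ℝ} (ha : ∀ k : ℕ, 1 / ((k:ℝ) + 1) ≤ a k)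
    (hab : ∀ k, a k ≤ b k) : ∃ L P : ℕ → ℕ, (∀ k, L k < L (k+1)) ∧ 3 ≤ L 0 ∧ 1 ≤ P 0 ∧
      (∀ k, P k + L k < P (k+1)) ∧
      (∀ k, min (a (k+1)) (b k) * (N * (L (k+1) + 1)) ≤ Real.log (P (k+1))) ∧
      (∀ k, b k * (N * (L k + 1)) ≤ Real.log (P (k+1))) ∧
      (∀ k, Real.log (P (k+1)) ≤ b k * (N * (L k + 2)) + 4 * Real.log (L k + 2) + Real.log 2) ∧
      (∀ k, Real.log (P k) ≤ a k * (N * (L k + 2))) ∧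
      Tendsto (fun k : ℕ => ((k:ℝ) + 1) * (L k + 1) / P k) atTop (nhds 0) := by
  set L : ℕ → ℕ := fun k => (LP N a b k).1 with hLdef
  set P : ℕ → ℕ := fun k => (LP N a b k).2 with hPdef
  have hL0 : L 0 = 3 := rfl
  have hP0 : P 0 = 1 := rfl
  have hPs : ∀ k, P (k+1) = nextP N (b k) (L k) := fun k => rfl
  have hLs : ∀ k, L (k+1) = nextL N (a (k+1)) (L k) (P (k+1)) := fun k => rfl
  clear_value L P
  have hNr : (1:ℝ) ≤ N := by exact_mod_cast hN
  have hapos : ∀ k, 0 < a k := fun k => lt_of_lt_of_le (by positivity) (ha k)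
  have hbpos : ∀ k, 0 < b k := fun k => (hapos k).trans_le (hab k)
  have hLmono : ∀ k, L k < L (k+1) := by
    intro k; rw [hLs, nextL]; have := le_max_left (L k + 1) (⌊Real.log (P (k+1)) / (N * a (k+1))⌋₊ - 1)
    omega
  have hLk : ∀ k, k + 3 ≤ L k := by
    intro k
    induction k with
    | zero => omega
    | succ k ih => have := hLmono k; omega
  -- E
  have hE1 : ∀ k, 1 ≤ Real.exp (b k * (N * (L k + 2))) := by
    intro k; apply Real.one_le_exp
    have := (hbpos k).le
    positivity
  have hPge : ∀ k, ((L k:ℝ) + 2) ^ 4 * Real.exp (b k * (N * (L k + 2))) ≤ P (k+1) := by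
    intro k; rw [hPs]; exact Nat.le_ceil _
  have hl1 : ∀ k, 1 ≤ ((L k:ℝ) + 2) ^ 4 := fun k => one_le_pow₀ (by linarith [(L k).cast_nonneg (α := ℝ)])
  have hPle : ∀ k, (P (k+1) : ℝ) ≤ 2 * (((L k:ℝ) + 2) ^ 4 * Real.exp (b k * (N * (L k + 2)))) := by
    intro k; rw [hPs]
    have h1 := Nat.ceil_lt_add_one (a := ((L k:ℝ) + 2) ^ 4 * Real.exp (b k * (N * (L k + 2))))
      (by positivity)
    have h2 : 1 ≤ ((L k:ℝ) + 2) ^ 4 * Real.exp (b k * (N * (L k + 2))) :=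
      one_le_mul_of_one_le_of_one_le (hl1 k) (hE1 k)
    unfold nextP; linarith
  have hPpos : ∀ k, (1:ℝ) ≤ P k := by
    intro k
    cases k with
    | zero => rw [hP0]; simp
    | succ k => exact (one_le_mul_of_one_le_of_one_le (hl1 k) (hE1 k)).trans (hPge k)
  have hlogE : ∀ k, b k * (N * (L k + 2)) + 4 * Real.log (L k + 2) ≤ Real.log (P (k+1)) := by
    intro k
    have := Real.log_le_log (by positivity) (hPge k)
    rw [Real.log_mul (by positivity) (by positivity), Real.log_exp, Real.log_pow] at this
    push_cast at this; linarith
  have hlogl : ∀ k, 0 ≤ Real.log ((L k:ℝ) + 2) := fun k =>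
    Real.log_nonneg (by linarith [(L k).cast_nonneg (α := ℝ)])
  have hH3 : ∀ k, Real.log (P (k+1)) ≤ b k * (N * (L k + 2)) + 4 * Real.log (L k + 2) + Real.log 2 := by
    intro k
    have := Real.log_le_log (by linarith [hPpos (k+1)]) (hPle k)
    rw [Real.log_mul (by positivity) (by positivity), Real.log_mul (by positivity) (by positivity),
      Real.log_exp, Real.log_pow] at this
    push_cast at this; linarith
  have hH4 : ∀ k, Real.log (P k) ≤ a k * (N * (L k + 2)) := by
    intro k
    cases k with
    | zero => rw [hP0]; simp; have := (hapos 0).le; positivity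
    | succ k =>
      have h0 := hapos (k+1)
      have h1 := Nat.lt_floor_add_one (Real.log (P (k+1)) / (N * a (k+1)))
      have h2 : ⌊Real.log (P (k+1)) / (N * a (k+1))⌋₊ ≤ L (k+1) + 1 := by
        rw [hLs (k)]; unfold nextL; omega
      have h3 : (⌊Real.log (P (k+1)) / (N * a (k+1))⌋₊ : ℝ) ≤ L (k+1) + 1 := by exact_mod_cast h2
      have h4 : Real.log (P (k+1)) / (N * a (k+1)) ≤ L (k+1) + 2 := by linarith
      rw [div_le_iff₀ (by positivity)] at h4
      linarith
  have hcase : ∀ k, L (k+1) = L k + 1 ∨ a (k+1) * (N * (L (k+1) + 1)) ≤ Real.log (P (k+1)) := by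
    intro k
    by_cases hc : L (k+1) = L k + 1
    · exact Or.inl hc
    · right
      have h0 := hapos (k+1)
      have h2 : L (k+1) + 1 = ⌊Real.log (P (k+1)) / (N * a (k+1))⌋₊ := by
        have := hLs k; unfold nextL at this; omega
      have h1 := Nat.floor_le (a := Real.log (P (k+1)) / (N * a (k+1)))
        (div_nonneg (Real.log_nonneg (hPpos _)) (by positivity))
      rw [← h2, le_div_iff₀ (by positivity)] at h1
      push_cast at h1; linarith
  have hPmono : ∀ k, P k + L k < P (k+1) := by
    intro k
    have h1 : (P k : ℝ) ≤ Real.exp (b k * (N * (L k + 2))) := by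
      rw [← Real.log_le_iff_le_exp (by linarith [hPpos k])]
      refine (hH4 k).trans (mul_le_mul_of_nonneg_right (hab k) (by positivity))
    have h2 := hPge k
    have h3 := hE1 k
    have h4 : (L k : ℝ) + 2 ≤ ((L k:ℝ) + 2) ^ 4 :=
      le_self_pow₀ (by linarith [(L k).cast_nonneg (α := ℝ)]) (by norm_num)
    have h5 : (0:ℝ) ≤ L k := Nat.cast_nonneg _
    have : (P k + L k : ℝ) < P (k+1) := by nlinarith
    exact_mod_cast this
  have hPk : ∀ k, k ≤ P k := by
    intro k
    induction k with
    | zero => omega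
    | succ k ih => have := hPmono k; have := hLk k; omega
  refine ⟨L, P, hLmono, by omega, by omega, hPmono, fun k => ?_, fun k => ?_, hH3, hH4, ?_⟩
  · rcases hcase k with hc | hc
    · rw [hc]; push_cast
      refine le_trans ?_ (hlogE k)
      have h1 : min (a (k+1)) (b k) * (N * ((L k:ℝ) + 1 + 1)) ≤ b k * (N * ((L k:ℝ) + 1 + 1)) :=
        mul_le_mul_of_nonneg_right (min_le_right _ _) (by positivity)
      have h2 := hlogl k
      have : (L k:ℝ) + 1 + 1 = L k + 2 := by ring
      rw [this] at h1 ⊢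
      linarith
    · exact (mul_le_mul_of_nonneg_right (min_le_left _ _) (by positivity)).trans hc
  · refine le_trans ?_ (hlogE k)
    have h1 : b k * (N * ((L k:ℝ) + 1)) ≤ b k * (N * ((L k:ℝ) + 2)) := by
      apply mul_le_mul_of_nonneg_left _ (hbpos k).le
      gcongr; norm_num
    linarith [hlogl k]
  · rw [← tendsto_add_atTop_iff_nat 1]
    have hPtop : Tendsto (fun k => (P (k+1) : ℝ)) atTop atTop := by
      apply tendsto_natCast_atTop_atTop.comp
      apply tendsto_atTop_mono (fun k => (hPk (k+1)))
      exact tendsto_add_atTop_nat 1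
    have hf : Tendsto (fun x : ℝ => 1 / x ^ (1/2:ℝ) + Real.log x / x ^ (1/2:ℝ)) atTop (nhds 0) := by
      have h1 := (isLittleO_log_rpow_atTop (r := 1/2) (by norm_num)).tendsto_div_nhds_zero
      have h2 := (tendsto_rpow_neg_atTop (y := 1/2) (by norm_num))
      have h3 := h2.add h1
      rw [add_zero] at h3
      refine h3.congr' ?_
      filter_upwards [eventually_gt_atTop 0] with x hx
      rw [Real.rpow_neg hx.le, inv_eq_one_div]
    refine squeeze_zero (fun k => by positivity) (fun k => ?_) (hf.comp hPtop)
    simp only [Function.comp]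
    have hp : (1:ℝ) ≤ P (k+1) := hPpos _
    have hlog := Real.log_nonneg hp
    rw [← Real.sqrt_eq_rpow, ← add_div]
    have hs : 0 < √(P (k+1) : ℝ) := Real.sqrt_pos.2 (by linarith)
    rw [div_le_div_iff₀ (by linarith) hs]
    have hss : (P (k+1) : ℝ) = √(P (k+1)) * √(P (k+1)) := (Real.mul_self_sqrt (by linarith)).symm
    have hl2 : ((L k:ℝ) + 2) ^ 2 ≤ √(P (k+1) : ℝ) := by
      apply Real.le_sqrt_of_sq_le
      have := hPge k
      have h3 := hE1 k
      have h4 := hl1 k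
      nlinarith
    have hk2 : ((k:ℝ) + 2) ≤ L k + 2 := by
      have := hLk k
      have : (k:ℝ) ≤ L k := by exact_mod_cast (by omega)
      linarith
    have hmain : ((k:ℝ) + 2) * (L (k+1) + 1) ≤ ((L k:ℝ) + 2) ^ 2 * (1 + Real.log (P (k+1))) := by
      rcases hcase k with hc | hc
      · rw [hc]; push_cast
        have h5 : (0:ℝ) ≤ L k := Nat.cast_nonneg _
        have : ((k:ℝ) + 2) * ((L k:ℝ) + 1 + 1) ≤ ((L k:ℝ) + 2) ^ 2 := by nlinarith
        have : 0 ≤ ((L k:ℝ) + 2) ^ 2 * Real.log (P (k+1)) := by positivity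
        linarith
      · have h1 := ha (k+1)
        push_cast at h1
        have h2 : (L (k+1) : ℝ) + 1 ≤ N * (L (k+1) + 1) := by
          have : (0:ℝ) ≤ L (k+1) := Nat.cast_nonneg _
          nlinarith
        have h3 : 1 / ((k:ℝ) + 1 + 1) * (L (k+1) + 1) ≤ Real.log (P (k+1)) := by
          refine le_trans ?_ hc
          exact mul_le_mul h1 h2 (by positivity) (hapos _).le
        rw [one_div_mul_eq_div, div_le_iff₀ (by positivity)] at h3
        have h4 : ((k:ℝ) + 2) * (L (k+1) + 1) ≤ (k + 2) * ((k+2) * Real.log (P (k+1))) := by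
          apply mul_le_mul_of_nonneg_left _ (by positivity); linarith
        have h5 : ((k:ℝ) + 2) * (k+2) ≤ ((L k:ℝ) + 2) ^ 2 := by
          rw [sq]; exact mul_le_mul hk2 hk2 (by positivity) (by positivity)
        have h6 := mul_le_mul_of_nonneg_right h5 hlog
        have : 0 ≤ ((L k:ℝ) + 2) ^ 2 := by positivity
        linarith
    push_cast
    have e : ((k:ℝ) + 1 + 1) = k + 2 := by ring
    rw [e]
    calc ((k:ℝ) + 2) * (L (k+1) + 1) * √(P (k+1))
        ≤ (√(P (k+1)) * (1 + Real.log (P (k+1)))) * √(P (k+1)) := by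
          apply mul_le_mul_of_nonneg_right _ hs.le
          exact hmain.trans (mul_le_mul_of_nonneg_right hl2 (by linarith))
      _ = (1 + Real.log (P (k+1))) * P (k+1) := by rw [hss, Real.sqrt_mul_self hs.le]; ring

end BW


namespace BW

lemma wr_upper {β x y : ℝ} {n m : ℕ} (hm : 1 ≤ m)
    (h : ∀ i < n, betaDigit β x (m + i) = betaDigit β y i) :
    waitingRatio β x y n ≤ ((Real.log m / n : ℝ) : EReal) := by
  have hle : waitingTime β x y n ≤ (m : ℕ∞) :=
    sInf_le ⟨m, rfl, hm, fun i hi => by rw [digit_add]; exact h i hi⟩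
  have hge : (1 : ℕ∞) ≤ waitingTime β x y n := by
    apply le_sInf
    rintro k ⟨m, rfl, hm, -⟩
    exact_mod_cast hm
  have hne : waitingTime β x y n ≠ ⊤ := ne_top_of_le_ne_top (ENat.natCast_ne_top m) hle
  unfold waitingRatio
  rw [dif_neg hne]
  generalize waitingTime β x y n = w at *
  lift w to ℕ using hne
  have hle' : w ≤ m := by exact_mod_cast hle
  have hge' : 1 ≤ w := by exact_mod_cast hge
  have : ((w : ℕ∞).untop hne : ℕ) = w := rfl
  rw [this, EReal.coe_le_coe_iff]
  apply div_le_div_of_nonneg_right _ (by positivity)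
  apply Real.log_le_log
  · exact_mod_cast hge'
  · exact_mod_cast hle'

lemma wr_lower {β x y : ℝ} {n K : ℕ} (hK : 1 ≤ K)
    (h : ∀ m, (∀ i < n, betaDigit β x (m + i) = betaDigit β y i) → K ≤ m) :
    ((Real.log K / n : ℝ) : EReal) ≤ waitingRatio β x y n := by
  unfold waitingRatio
  split_ifs with hne
  · exact le_top
  have hge : (K : ℕ∞) ≤ waitingTime β x y n := by
    apply le_sInf
    rintro k ⟨m, rfl, hm, hd⟩
    have := h m (fun i hi => by rw [← digit_add]; exact hd i hi)
    exact_mod_cast this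
  generalize waitingTime β x y n = w at *
  lift w to ℕ using hne
  have hge' : K ≤ w := by exact_mod_cast hge
  have : ((w : ℕ∞).untop hne : ℕ) = w := rfl
  rw [this, EReal.coe_le_coe_iff]
  apply div_le_div_of_nonneg_right _ (by positivity)
  apply Real.log_le_log
  · exact_mod_cast hK
  · exact_mod_cast hge'

lemma locate {f : ℕ → ℕ} (hf : StrictMono f) {K n : ℕ} (h : f K ≤ n) :
    ∃ k ≥ K, f k ≤ n ∧ n < f (k+1) := by
  induction n with
  | zero => exact ⟨K, le_rfl, h, by have := hf (Nat.lt_add_one K); omega⟩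
  | succ n ih =>
    by_cases hK : f K ≤ n
    · obtain ⟨k, hk, h1, h2⟩ := ih hK
      by_cases h3 : n + 1 < f (k+1)
      · exact ⟨k, hk, by omega, h3⟩
      · exact ⟨k+1, by omega, by omega, by have := hf (Nat.lt_add_one (k+1)); omega⟩
    · exact ⟨K, le_rfl, h, by have := hf (Nat.lt_add_one K); omega⟩

lemma limits {N : ℕ} (hN : 1 ≤ N) {a b : ℕ → ℝ} {A B : EReal}
    (hA0 : 0 ≤ A) (hAB : A ≤ B)
    (ha : Tendsto (fun k => (a k : EReal)) atTop (nhds A))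
    (hb : Tendsto (fun k => (b k : EReal)) atTop (nhds B)) {L P : ℕ → ℕ}
    (hL : ∀ k, L k < L (k+1)) (hL0 : 3 ≤ L 0) (hP : ∀ k, 1 ≤ P k)
    (H1 : ∀ k, min (a (k+1)) (b k) * (N * (L (k+1) + 1)) ≤ Real.log (P (k+1)))
    (H2 : ∀ k, b k * (N * (L k + 1)) ≤ Real.log (P (k+1)))
    (H3 : ∀ k, Real.log (P (k+1)) ≤ b k * (N * (L k + 2)) + 4 * Real.log (L k + 2) + Real.log 2)
    (H4 : ∀ k, Real.log (P k) ≤ a k * (N * (L k + 2)))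
    {r : ℕ → EReal}
    (R1 : ∀ k n, n ≤ N * L k → r n ≤ ((Real.log ((N * P k : ℕ)) / n : ℝ) : EReal))
    (R2 : ∀ k n, N * L k + N ≤ n → ((Real.log ((N * P (k+1) : ℕ)) / n : ℝ) : EReal) ≤ r n) :
    liminf r atTop = A ∧ limsup r atTop = B := by
  have hLm : StrictMono L := strictMono_nat_of_lt_succ hL
  have hNr : (1:ℝ) ≤ N := by exact_mod_cast hN
  have hLtop : Tendsto (fun k => (L k : ℝ)) atTop atTop :=
    tendsto_natCast_atTop_atTop.comp hLm.tendsto_atTop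
  have hL3 : ∀ k, 3 ≤ L k := fun k => hL0.trans (hLm.monotone (Nat.zero_le k))
  have hLr : ∀ k, (3:ℝ) ≤ L k := fun k => by exact_mod_cast hL3 k
  have hlogNP : ∀ k, Real.log ((N * P k : ℕ)) = Real.log N + Real.log (P k) := by
    intro k
    have : (P k : ℝ) ≠ 0 := by have := hP k; positivity
    push_cast
    rw [Real.log_mul (by positivity) this]
  have hlogN : 0 ≤ Real.log N := Real.log_nonneg hNr
  have hlogP : ∀ k, 0 ≤ Real.log (P k) := fun k => Real.log_nonneg (by exact_mod_cast hP k)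
  have hm1 : StrictMono (fun k => N * L k + N) := fun i j hij => by
    have := Nat.mul_lt_mul_of_pos_left (hLm hij) (show 0 < N by omega)
    simp only; omega
  have hm2 : StrictMono (fun k => N * L k + 1) := fun i j hij => by
    have := Nat.mul_lt_mul_of_pos_left (hLm hij) (show 0 < N by omega)
    simp only; omega
  have hm3 : StrictMono (fun k => N * L k) := fun i j hij => by
    have := Nat.mul_lt_mul_of_pos_left (hLm hij) (show 0 < N by omega)
    simp only; omega
  -- eventual lower bound
  have l1 : A ≤ liminf r atTop := by
    refine le_of_forall_lt fun c hc => ?_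
    obtain ⟨c', hc1, hc2⟩ := exists_between hc
    refine hc1.trans_le (le_liminf_of_le (by isBoundedDefault) ?_)
    have e1 := (ha.comp (tendsto_add_atTop_nat 1)).eventually (lt_mem_nhds hc2)
    have e2 := hb.eventually (lt_mem_nhds (hc2.trans_le hAB))
    obtain ⟨K, hK⟩ := eventually_atTop.1 (e1.and e2)
    filter_upwards [eventually_ge_atTop (N * L K + N)] with n hn
    obtain ⟨k, hk, hk1, hk2⟩ := locate hm1 hn
    obtain ⟨f1, f2⟩ := hK k hk
    simp only [Function.comp] at f1
    have f3 : c' ≤ ((min (a (k+1)) (b k) : ℝ) : EReal) := by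
      rcases min_choice (a (k+1)) (b k) with h | h <;> rw [h]
      · exact f1.le
      · exact f2.le
    refine f3.trans (le_trans ?_ (R2 k n hk1))
    rw [EReal.coe_le_coe_iff]
    have hnpos : (0:ℝ) < n := by exact_mod_cast (by omega)
    have hnle : (n:ℝ) ≤ N * (L (k+1) + 1) := by
      have : n ≤ N * (L (k+1) + 1) := by rw [mul_add]; omega
      exact_mod_cast this
    rw [le_div_iff₀ hnpos, hlogNP]
    by_cases hs : 0 ≤ min (a (k+1)) (b k)
    · have := mul_le_mul_of_nonneg_left hnle hs
      linarith [H1 k]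
    · have : min (a (k+1)) (b k) * n ≤ 0 := mul_nonpos_of_nonpos_of_nonneg (not_le.1 hs).le hnpos.le
      linarith [hlogP (k+1)]
  have l2 : B ≤ limsup r atTop := by
    refine le_of_forall_lt fun c hc => ?_
    obtain ⟨c', hc1, hc2⟩ := exists_between hc
    refine hc1.trans_le (le_limsup_of_frequently_le ?_ (by isBoundedDefault))
    have e2 := hb.eventually (lt_mem_nhds hc2)
    refine hm1.tendsto_atTop.frequently (Eventually.frequently ?_)
    filter_upwards [e2] with k f2
    refine f2.le.trans (le_trans ?_ (R2 k _ le_rfl))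
    rw [EReal.coe_le_coe_iff, hlogNP]
    push_cast
    rw [le_div_iff₀ (by positivity)]
    have := H2 k
    linarith
  have l3 : limsup r atTop ≤ B := by
    by_cases hB : B = ⊤
    · rw [hB]; exact le_top
    lift B to ℝ using ⟨hB, ((EReal.bot_lt_zero.trans_le hA0).trans_le hAB).ne'⟩
    rw [EReal.tendsto_coe] at hb
    have hU : Tendsto (fun k => b k + 2 * b k / L k + (4 * Real.log (L k + 2) + Real.log 2 + Real.log N) / L k)
        atTop (nhds B) := by
      have t1 : Tendsto (fun k => 2 * b k / L k) atTop (nhds 0) :=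
        (hb.const_mul 2).div_atTop hLtop
      have t2 : Tendsto (fun x : ℝ => (4 * Real.log (x + 2) + Real.log 2 + Real.log N) / x) atTop (nhds 0) := by
        have s1 : Tendsto (fun x : ℝ => Real.log x / x) atTop (nhds 0) := by
          have := (isLittleO_log_rpow_atTop (r := 1) (by norm_num)).tendsto_div_nhds_zero
          simpa using this
        have s2 : Tendsto (fun x : ℝ => Real.log (x+2) / (x+2)) atTop (nhds 0) :=
          s1.comp (tendsto_atTop_add_const_right _ _ tendsto_id)
        have s3 : Tendsto (fun x : ℝ => 1 + 2 / x) atTop (nhds (1 + 0)) :=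
          tendsto_const_nhds.add (tendsto_const_nhds.div_atTop tendsto_id)
        have s4 : Tendsto (fun x : ℝ => (Real.log 2 + Real.log N) / x) atTop (nhds 0) :=
          tendsto_const_nhds.div_atTop tendsto_id
        have s5 := ((s2.mul s3).const_mul 4).add s4
        simp only [zero_mul, mul_zero, add_zero] at s5
        refine s5.congr' ?_
        filter_upwards [eventually_gt_atTop 0] with x hx
        have : x + 2 ≠ 0 := by positivity
        field_simp
        ring
      have := (hb.add t1).add (t2.comp hLtop)
      simpa using this
    refine le_of_forall_gt fun c hc => ?_
    obtain ⟨c', hc1, hc2⟩ := exists_between hc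
    refine lt_of_le_of_lt (limsup_le_of_le (by isBoundedDefault) ?_) hc2
    have e1 := (EReal.tendsto_coe.2 hU).eventually (gt_mem_nhds hc1)
    obtain ⟨K, hK⟩ := eventually_atTop.1 e1
    filter_upwards [eventually_ge_atTop (N * L K + 1)] with n hn
    obtain ⟨k, hk, hk1, hk2⟩ := locate hm2 hn
    refine (R1 (k+1) n (by omega)).trans (le_trans ?_ (hK k hk).le)
    rw [EReal.coe_le_coe_iff, hlogNP]
    have hLk := hLr k
    have hnn : (N:ℝ) * L k ≤ n := by
      have : N * L k ≤ n := by omega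
      exact_mod_cast this
    have hNL : 0 < (N:ℝ) * L k := by positivity
    have hnum : 0 ≤ 4 * Real.log ((L k:ℝ) + 2) + Real.log 2 + Real.log N := by
      have := Real.log_nonneg (show (1:ℝ) ≤ L k + 2 by linarith)
      have := Real.log_nonneg (show (1:ℝ) ≤ 2 by norm_num)
      linarith
    calc (Real.log N + Real.log (P (k+1))) / n
        ≤ (Real.log N + Real.log (P (k+1))) / (N * L k) := by
          apply div_le_div_of_nonneg_left _ hNL hnn
          linarith [hlogP (k+1)]
      _ ≤ (b k * (N * (L k + 2)) + (4 * Real.log (L k + 2) + Real.log 2 + Real.log N)) / (N * L k) := by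
          apply div_le_div_of_nonneg_right _ hNL.le
          linarith [H3 k]
      _ = b k + 2 * b k / L k + (4 * Real.log (L k + 2) + Real.log 2 + Real.log N) / (N * L k) := by
          field_simp
      _ ≤ _ := by
          gcongr
          nlinarith
  have l4 : liminf r atTop ≤ A := by
    by_cases hB : A = ⊤
    · rw [hB]; exact le_top
    lift A to ℝ using ⟨hB, (EReal.bot_lt_zero.trans_le hA0).ne'⟩
    rw [EReal.tendsto_coe] at ha
    have hU : Tendsto (fun k => a k + 2 * a k / L k + Real.log N / L k) atTop (nhds A) := by
      have t1 : Tendsto (fun k => 2 * a k / L k) atTop (nhds 0) :=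
        (ha.const_mul 2).div_atTop hLtop
      have t2 : Tendsto (fun k => Real.log N / L k) atTop (nhds 0) :=
        tendsto_const_nhds.div_atTop hLtop
      have := (ha.add t1).add t2
      simpa using this
    refine le_of_forall_gt fun c hc => ?_
    obtain ⟨c', hc1, hc2⟩ := exists_between hc
    refine lt_of_le_of_lt (liminf_le_of_frequently_le ?_ (by isBoundedDefault)) hc2
    have e1 := (EReal.tendsto_coe.2 hU).eventually (gt_mem_nhds hc1)
    refine hm3.tendsto_atTop.frequently (Eventually.frequently ?_)
    filter_upwards [e1] with k f2
    refine (R1 k _ le_rfl).trans (le_trans ?_ f2.le)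
    rw [EReal.coe_le_coe_iff, hlogNP]
    push_cast
    have hLk := hLr k
    have hNL : 0 < (N:ℝ) * L k := by positivity
    calc (Real.log N + Real.log (P k)) / (N * L k)
        ≤ (a k * (N * (L k + 2)) + Real.log N) / (N * L k) := by
          apply div_le_div_of_nonneg_right _ hNL.le
          linarith [H4 k]
      _ = a k + 2 * a k / L k + Real.log N / (N * L k) := by
          field_simp
      _ ≤ _ := by
          gcongr
          nlinarith
  exact ⟨le_antisymm l4 l1, le_antisymm l3 l2⟩

lemma density {L P : ℕ → ℕ} (hL : ∀ k, L k < L (k+1)) (hP : ∀ k, P k + L k < P (k+1))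
    (h : Tendsto (fun k : ℕ => ((k:ℝ) + 1) * (L k + 1) / P k) atTop (nhds 0)) (hP1 : ∀ k, 1 ≤ P k)
    {free : ℕ → Prop} [DecidablePred free]
    (hfree : ∀ i, ¬ free i → ∃ k, P k ≤ i ∧ i ≤ P k + L k) {τ : ℝ} (hτ : τ < 1) :
    ∃ C : ℕ, ∀ i : ℕ, τ * i ≤ Nat.count free i + C := by
  have hPm : StrictMono P := strictMono_nat_of_lt_succ fun k => by have := hP k; omega
  have hLm : StrictMono L := strictMono_nat_of_lt_succ hL
  obtain ⟨K, hK⟩ := eventually_atTop.1 (h.eventually (gt_mem_nhds (sub_pos.2 hτ)))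
  refine ⟨P K, fun i => ?_⟩
  by_cases hi : i ≤ P K
  · have h1 : (i:ℝ) ≤ P K := by exact_mod_cast hi
    have h2 : (0:ℝ) ≤ Nat.count free i := Nat.cast_nonneg _
    have h3 : (0:ℝ) ≤ i := Nat.cast_nonneg _
    nlinarith
  · obtain ⟨k, hk, hk1, hk2⟩ := locate hPm (not_le.1 hi).le
    have hsplit : i = Nat.count free i + ((Finset.range i).filter (fun j => ¬ free j)).card := by
      rw [Nat.count_eq_card_filter_range, Finset.card_filter_add_card_filter_not, Finset.card_range]
    have hcard : ((Finset.range i).filter (fun j => ¬ free j)).card ≤ (k+1) * (L k + 1) := by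
      have hsub : (Finset.range i).filter (fun j => ¬ free j) ⊆
          (Finset.range (k+1)).biUnion (fun l => Finset.Icc (P l) (P l + L l)) := by
        intro j hj
        rw [Finset.mem_filter, Finset.mem_range] at hj
        obtain ⟨l, hl1, hl2⟩ := hfree j hj.2
        rw [Finset.mem_biUnion]
        refine ⟨l, ?_, by rw [Finset.mem_Icc]; exact ⟨hl1, hl2⟩⟩
        rw [Finset.mem_range]
        exact hPm.lt_iff_lt.1 (by omega)
      refine (Finset.card_le_card hsub).trans (Finset.card_biUnion_le.trans ?_)
      refine (Finset.sum_le_card_nsmul _ _ (L k + 1) ?_).trans (by simp)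
      intro l hl
      rw [Finset.mem_range] at hl
      have := hLm.monotone (show l ≤ k by omega)
      rw [Nat.card_Icc]; omega
    have hKk := hK k hk
    have hPk : (0:ℝ) < P k := by have := hP1 k; positivity
    rw [div_lt_iff₀ hPk] at hKk
    have hs' : (i:ℝ) = Nat.count free i + ((Finset.range i).filter (fun j => ¬ free j)).card := by
      exact_mod_cast hsplit
    have hc' : (((Finset.range i).filter (fun j => ¬ free j)).card : ℝ) ≤ (k+1) * (L k + 1) := by
      exact_mod_cast hcard
    have hik : (P k : ℝ) ≤ i := by exact_mod_cast hk1
    have : (0:ℝ) ≤ P K := Nat.cast_nonneg _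
    nlinarith

end BW

namespace BW

lemma approx {A B : EReal} (hA : 0 ≤ A) (hAB : A ≤ B) : ∃ a b : ℕ → ℝ,
    (∀ k : ℕ, 1 / ((k:ℝ) + 1) ≤ a k) ∧ (∀ k, a k ≤ b k) ∧
    Tendsto (fun k => (a k : EReal)) atTop (nhds A) ∧
    Tendsto (fun k => (b k : EReal)) atTop (nhds B) := by
  have hc : Tendsto (fun k : ℕ => (k:ℝ)) atTop atTop := tendsto_natCast_atTop_atTop
  have h1 : Tendsto (fun k : ℕ => 1 / ((k:ℝ) + 1)) atTop (nhds 0) :=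
    tendsto_one_div_add_atTop_nhds_zero_nat
  have hp : ∀ k : ℕ, 0 < 1 / ((k:ℝ) + 1) := fun k => by positivity
  induction A with
  | bot => simp at hA
  | top =>
    have hB : B = ⊤ := top_le_iff.1 hAB
    subst hB
    have ht : Tendsto (fun k : ℕ => (((k:ℝ) + 1 : ℝ) : EReal)) atTop (nhds ⊤) := by
      rw [EReal.tendsto_coe_nhds_top_iff]
      exact tendsto_atTop_add_const_right _ _ hc
    refine ⟨fun k => (k:ℝ) + 1, fun k => (k:ℝ) + 1, fun k => ?_, fun k => le_rfl, ht, ht⟩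
    have : (0:ℝ) ≤ k := Nat.cast_nonneg k
    rw [div_le_iff₀ (by positivity)]; nlinarith
  | coe A =>
    have hA' : 0 ≤ A := by exact_mod_cast hA
    have hta : Tendsto (fun k : ℕ => A + 1 / ((k:ℝ) + 1)) atTop (nhds A) := by
      simpa using h1.const_add A
    induction B with
    | bot => simp at hAB
    | top =>
      refine ⟨fun k => A + 1 / ((k:ℝ) + 1), fun k => A + 1 / ((k:ℝ) + 1) + k, fun k => by linarith,
        fun k => by have : (0:ℝ) ≤ k := Nat.cast_nonneg k
                    linarith, EReal.tendsto_coe.2 hta, ?_⟩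
      rw [EReal.tendsto_coe_nhds_top_iff]
      refine tendsto_atTop_mono (fun k => ?_) hc
      have := hp k
      linarith
    | coe B =>
      have hAB' : A ≤ B := by exact_mod_cast hAB
      refine ⟨fun k => A + 1 / ((k:ℝ) + 1), fun k => B + 1 / ((k:ℝ) + 1), fun k => by linarith,
        fun k => by linarith, EReal.tendsto_coe.2 hta, EReal.tendsto_coe.2 ?_⟩
      simpa using h1.const_add B

lemma holder_dim {S : Type*} (Φ Ψ : S → ℝ × ℝ) {r : NNReal} (hr : 0 < r) {C : ℝ} (hC : 0 ≤ C)
    (h : ∀ s s', dist (Ψ s) (Ψ s') ≤ C * dist (Φ s) (Φ s') ^ (r:ℝ)) :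
    dimH (range Ψ) ≤ dimH (range Φ) / r := by
  classical
  rcases isEmpty_or_nonempty S with hS | hS
  · simp [range_eq_empty]
  let g : ℝ × ℝ → S := Function.invFun Φ
  have hg : ∀ s, Φ (g (Φ s)) = Φ s := fun s => Function.invFun_eq ⟨s, rfl⟩
  have h0 : ∀ s, Ψ (g (Φ s)) = Ψ s := by
    intro s
    have := h (g (Φ s)) s
    rw [hg, dist_self, Real.zero_rpow (by exact_mod_cast hr.ne'), mul_zero] at this
    exact dist_le_zero.1 this
  have hH : HolderOnWith C.toNNReal r (fun p => Ψ (g p)) (range Φ) := by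
    rintro _ ⟨s, rfl⟩ _ ⟨s', rfl⟩
    simp only [h0]
    rw [edist_dist, edist_dist, ENNReal.ofReal_rpow_of_nonneg dist_nonneg r.coe_nonneg]
    change _ ≤ ENNReal.ofReal C * _
    rw [← ENNReal.ofReal_mul hC]
    exact ENNReal.ofReal_le_ofReal (h s s')
  have := hH.dimH_image_le hr
  refine le_trans (dimH_mono ?_) this
  rintro _ ⟨s, rfl⟩
  exact ⟨Φ s, ⟨s, rfl⟩, h0 s⟩

/-- The positions covered by inserted blocks. -/
def Cov (L P : ℕ → ℕ) (i : ℕ) : Prop := ∃ k, P k ≤ i ∧ i ≤ P k + L k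

open Classical in
/-- The sequence of letters of the first coordinate. -/
noncomputable def om (L P : ℕ → ℕ) (η : ℕ → ℝ) (bk : ℝ → ℝ) (f : ℕ → ℝ) (i : ℕ) : ℝ :=
  if h : Cov L P i then
    (if i < P h.choose + L h.choose then η (i - P h.choose) else bk (η (L h.choose)))
  else f i

lemma cov_unique {L P : ℕ → ℕ} (hP : ∀ k, P k + L k < P (k+1)) {i k k' : ℕ}
    (h : P k ≤ i ∧ i ≤ P k + L k) (h' : P k' ≤ i ∧ i ≤ P k' + L k') : k = k' := by
  have hm : StrictMono P := strictMono_nat_of_lt_succ (fun k => by have := hP k; omega)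
  rcases lt_trichotomy k k' with hk | hk | hk
  · have := hm.monotone (show k + 1 ≤ k' from hk)
    have := hP k
    omega
  · exact hk
  · have := hm.monotone (show k' + 1 ≤ k from hk)
    have := hP k'
    omega

lemma om_ins {L P : ℕ → ℕ} (hP : ∀ k, P k + L k < P (k+1)) (η : ℕ → ℝ) (bk : ℝ → ℝ) (f : ℕ → ℝ)
    (k l : ℕ) (hl : l < L k) : om L P η bk f (P k + l) = η l := by
  have h : Cov L P (P k + l) := ⟨k, by omega, by omega⟩
  have hk : h.choose = k := cov_unique hP h.choose_spec ⟨by omega, by omega⟩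
  unfold om
  rw [dif_pos h, hk, if_pos (by omega)]
  congr 1; omega

lemma om_brk {L P : ℕ → ℕ} (hP : ∀ k, P k + L k < P (k+1)) (η : ℕ → ℝ) (bk : ℝ → ℝ) (f : ℕ → ℝ)
    (k : ℕ) : om L P η bk f (P k + L k) = bk (η (L k)) := by
  have h : Cov L P (P k + L k) := ⟨k, by omega, by omega⟩
  have hk : h.choose = k := cov_unique hP h.choose_spec ⟨by omega, by omega⟩
  unfold om
  rw [dif_pos h, hk, if_neg (by omega)]

lemma om_free {L P : ℕ → ℕ} (η : ℕ → ℝ) (bk : ℝ → ℝ) (f : ℕ → ℝ)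
    {i : ℕ} (h : ¬ Cov L P i) : om L P η bk f i = f i := by
  unfold om
  rw [dif_neg h]

/-- The letters of the second coordinate. -/
noncomputable def et {M : ℕ} (e : Fin M → ℝ) (v : ℕ → Fin M) (l : ℕ) : ℝ :=
  if l < 2 then 0 else e (v (l - 2))

lemma member {β : ℝ} (hβ : 1 < β) {N M : ℕ} (hN : 1 ≤ N)
    {e : Fin M → ℝ} (he : ∀ k, Full β N (e k) ∧ 0 < e k ∧ e k ≤ 1 - 2 / β ^ N)
    {bk : ℝ → ℝ} (hbk : ∀ c, bk c ≠ c ∧ ∃ k, bk c = e k)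
    {a b : ℕ → ℝ} {A B : EReal} (hA0 : 0 ≤ A) (hAB : A ≤ B)
    (ha : Tendsto (fun k => (a k : EReal)) atTop (nhds A))
    (hb : Tendsto (fun k => (b k : EReal)) atTop (nhds B))
    {L P : ℕ → ℕ} (hL : ∀ k, L k < L (k+1)) (hL0 : 3 ≤ L 0) (hP0 : 1 ≤ P 0)
    (hP : ∀ k, P k + L k < P (k+1))
    (H1 : ∀ k, min (a (k+1)) (b k) * (N * (L (k+1) + 1)) ≤ Real.log (P (k+1)))
    (H2 : ∀ k, b k * (N * (L k + 1)) ≤ Real.log (P (k+1)))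
    (H3 : ∀ k, Real.log (P (k+1)) ≤ b k * (N * (L k + 2)) + 4 * Real.log (L k + 2) + Real.log 2)
    (H4 : ∀ k, Real.log (P k) ≤ a k * (N * (L k + 2)))
    (g : ℕ → Fin M) (v : ℕ → Fin M) :
    (∀ i, Letter β N (et e v i)) ∧ (∀ i, Letter β N (om L P (et e v) bk (fun i => e (g i)) i)) ∧
    liminf (fun n => waitingRatio β (code β N (om L P (et e v) bk (fun i => e (g i))))
      (code β N (et e v)) n) atTop = A ∧
    limsup (fun n => waitingRatio β (code β N (om L P (et e v) bk (fun i => e (g i))))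
      (code β N (et e v)) n) atTop = B := by
  have he' : ∀ k, Letter β N (e k) := fun k => ⟨(he k).1, (he k).2.2⟩
  have hz : Letter β N 0 := ⟨full_zero_n β hβ N, by have := he (v 0); linarith [this.2.1, this.2.2]⟩
  have hη : ∀ i, Letter β N (et e v i) := by
    intro i; unfold et; split_ifs
    · exact hz
    · exact he' _
  have hω : ∀ i, Letter β N (om L P (et e v) bk (fun i => e (g i)) i) := by
    intro i; unfold om; split_ifs
    · exact hη _
    · obtain ⟨k, hk⟩ := (hbk (et e v (L (Exists.choose ‹Cov L P i›)))).2
      rw [hk]; exact he' k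
    · exact he' _
  refine ⟨hη, hω, ?_⟩
  set η := et e v with hηd
  set ω := om L P η bk (fun i => e (g i)) with hωd
  have hPm : StrictMono P := strictMono_nat_of_lt_succ (fun k => by have := hP k; omega)
  have hLm : StrictMono L := strictMono_nat_of_lt_succ hL
  have hP1 : ∀ k, 1 ≤ P k := fun k => hP0.trans (hPm.monotone (Nat.zero_le k))
  have hL3 : ∀ k, 3 ≤ L k := fun k => hL0.trans (hLm.monotone (Nat.zero_le k))
  have hX := code_digit hβ hN hω
  have hY := code_digit hβ hN hη
  have hins : ∀ k l, l < L k → ω (P k + l) = η l := om_ins hP η bk _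
  have hdig : ∀ c c', Letter β N c → Letter β N c' → c ≠ c' →
      ∃ j < N, betaDigit β c j ≠ betaDigit β c' j := by
    intro c c' hc hc' hne
    by_contra! hcon
    exact hne (letter_digits hβ hc hc' hcon)
  have hdig0 : ∀ c, Letter β N c → c ≠ 0 → ∃ j < N, betaDigit β c j ≠ 0 := by
    intro c hc hne
    obtain ⟨j, hj, h⟩ := hdig c 0 hc hz hne
    exact ⟨j, hj, by rwa [digit_zero] at h⟩
  have hη0 : ∀ l, 2 ≤ l → η l ≠ 0 := by
    intro l hl
    rw [hηd]; unfold et; rw [if_neg (by omega)]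
    exact (he _).2.1.ne'
  have hmatch : ∀ m n, 3 * N ≤ n → (∀ i < n, betaDigit β (code β N ω) (m + i) =
      betaDigit β (code β N η) i) → ∃ k, m = N * P k ∧ n < N * (L k + 1) := by
    intro m n hn hm
    refine match_lemma hN (D := betaDigit β) hX hY (digit_zero β) (fun i hi => hdig0 _ (hω i) hi)
      (by simp [hηd, et]) (by simp [hηd, et]) (hdig0 _ (hη 2) (hη0 2 le_rfl)) hL3 hins ?_ ?_ hn hm
    · intro k
      refine hdig _ _ (hω _) (hη _) ?_
      rw [hωd, om_brk hP]
      exact (hbk _).1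
    · intro i hi
      by_cases hc : Cov L P i
      · obtain ⟨k, hk1, hk2⟩ := hc
        refine ⟨k, ?_⟩
        rcases hk2.lt_or_eq with hlt | heq
        · have h1 := hins k (i - P k) (by omega)
          rw [show P k + (i - P k) = i by omega, hi] at h1
          by_contra hcon
          exact hη0 (i - P k) (by omega) h1.symm
        · exfalso
          rw [heq, hωd, om_brk hP] at hi
          obtain ⟨k', hk'⟩ := (hbk (η (L k))).2
          rw [hk'] at hi
          exact (he k').2.1.ne' hi
      · exfalso
        rw [hωd, om_free _ _ _ hc] at hi
        exact (he _).2.1.ne' hi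
  refine limits hN hA0 hAB ha hb hL hL0 hP1 H1 H2 H3 H4 ?_ ?_
  · intro k n hn
    refine wr_upper (Nat.mul_pos hN (hP1 k)) ?_
    intro i hi
    have hi' : i < N * L k := by omega
    have hdm := Nat.div_add_mod i N
    have hmod := Nat.mod_lt i (show N > 0 by omega)
    have hdiv : i / N < L k := Nat.div_lt_of_lt_mul hi'
    have e1 := hX (P k + i / N) (i % N) hmod
    have e2 := hY (i / N) (i % N) hmod
    rw [hins k _ hdiv, ← e2, hdm, mul_add, add_assoc, hdm] at e1
    exact e1
  · intro k n hn
    refine wr_lower (Nat.mul_pos hN (hP1 _)) ?_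
    intro m hm
    have h3 : N * 3 ≤ N * L k := Nat.mul_le_mul_left _ (hL3 k)
    obtain ⟨j, hj, hnj⟩ := hmatch m n (by omega) hm
    have : N * (L k + 1) < N * (L j + 1) := by rw [mul_add]; omega
    have h4 := Nat.lt_of_mul_lt_mul_left this
    have h5 : k < j := hLm.lt_iff_lt.1 (by omega)
    rw [hj]
    exact Nat.mul_le_mul_left _ (hPm.monotone h5)

end BW

namespace BW

lemma coord {β : ℝ} (hβ : 1 < β) {N M : ℕ} (hN : 1 ≤ N) (hM : 2 ≤ M) {τ : ℝ} (hτ : 0 < τ)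
    (hMτ : β ^ ((N:ℝ) * τ) ≤ M) {c : ℕ → ℕ} {C : ℕ} (hc : ∀ i : ℕ, τ * i ≤ c i + C)
    {ω ω' : ℕ → ℝ} (h : ∀ i, Letter β N (ω i)) (h' : ∀ i, Letter β N (ω' i)) {u u' : ℕ → Fin M}
    (hag : ∀ i, (∀ j < i, ω j = ω' j) → ∀ j < c i, u j = u' j) :
    |Real.ofDigits u - Real.ofDigits u'| ≤
      ((M:ℝ) ^ (C:ℝ) * β ^ ((N:ℝ) * 2 * τ ^ 2)) * |code β N ω - code β N ω'| ^ (τ ^ 2) := by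
  have hM0 : (0:ℝ) < M := by positivity
  have hM1 : (1:ℝ) ≤ M := by exact_mod_cast (by omega : 1 ≤ M)
  have hβ0 : 0 < β := by linarith
  by_cases heq : ∀ i, ω i = ω' i
  · have : u = u' := by
      funext j
      obtain ⟨i, hi⟩ := exists_nat_gt (((j:ℝ) + C) / τ)
      refine hag i (fun j _ => heq j) j ?_
      rw [div_lt_iff₀ hτ] at hi
      have := hc i
      have : (j:ℝ) < c i := by linarith
      exact_mod_cast this
    rw [this, sub_self, abs_zero]
    positivity
  · push Not at heq
    classical
    set i := Nat.find heq with hi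
    have hne : ω i ≠ ω' i := Nat.find_spec heq
    have hlt : ∀ j < i, ω j = ω' j := fun j hj => by
      have := Nat.find_min heq hj
      simpa using this
    have h1 := Real.abs_ofDigits_sub_ofDigits_le (x := u) (y := u') (n := c i) (hag i hlt)
    have h2 := code_sep hβ hN i h h' hlt hne
    have h3 : ((1 / β ^ N) ^ (i+2) : ℝ) ^ (τ^2) ≤ |code β N ω - code β N ω'| ^ (τ^2) :=
      Real.rpow_le_rpow (by positivity) h2 (by positivity)
    have h4 : ((1 / β ^ N) ^ (i+2) : ℝ) = β ^ (-((N:ℝ) * (i + 2))) := by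
      rw [Real.rpow_neg hβ0.le, one_div, inv_pow, ← pow_mul]
      congr 1
      rw [← Real.rpow_natCast]; push_cast; rfl
    rw [h4, ← Real.rpow_mul hβ0.le] at h3
    have h5 : β ^ ((N:ℝ) * i * τ ^ 2) ≤ (M:ℝ) ^ ((c i : ℝ) + C) := by
      calc β ^ ((N:ℝ) * i * τ ^ 2) = (β ^ ((N:ℝ) * τ)) ^ (τ * i) := by
            rw [← Real.rpow_mul hβ0.le]; congr 1; ring
        _ ≤ (M:ℝ) ^ (τ * i) := Real.rpow_le_rpow (by positivity) hMτ (by positivity)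
        _ ≤ _ := Real.rpow_le_rpow_of_exponent_le hM1 (hc i)
    refine h1.trans ?_
    refine le_trans ?_ (mul_le_mul_of_nonneg_left h3 (by positivity))
    rw [mul_assoc, ← Real.rpow_add hβ0,
      show (N:ℝ) * 2 * τ^2 + -((N:ℝ) * (i + 2)) * τ^2 = -((N:ℝ) * i * τ ^ 2) by ring,
      Real.rpow_neg hβ0.le, ← div_eq_mul_inv, le_div_iff₀ (by positivity),
      inv_mul_le_iff₀ (by positivity), ← Real.rpow_natCast (M:ℝ), ← Real.rpow_add hM0]
    exact h5

lemma lower {β : ℝ} (hβ : 1 < β) {A B : EReal} (hA : 0 ≤ A) (hAB : A ≤ B) {τ : ℝ} (hτ0 : 0 < τ)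
    (hτ : τ < 1) (E : Set (ℝ × ℝ))
    (hE : E = {p : ℝ × ℝ | p.1 ∈ Set.Ico (0:ℝ) 1 ∧ p.2 ∈ Set.Ico (0:ℝ) 1 ∧
      Filter.liminf (fun n => waitingRatio β p.1 p.2 n) Filter.atTop = A ∧
      Filter.limsup (fun n => waitingRatio β p.1 p.2 n) Filter.atTop = B}) :
    ENNReal.ofReal (2 * τ ^ 2) ≤ dimH E := by
  classical
  obtain ⟨N, M, hN, hM, hMτ, e, hinj, he⟩ := letters hβ hτ
  obtain ⟨a, b, ha1, hab, ha, hb⟩ := approx hA hAB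
  obtain ⟨L, P, hL, hL0, hP0, hP, H1, H2, H3, H4, hd⟩ := seqs hN ha1 hab
  have hPm : StrictMono P := strictMono_nat_of_lt_succ (fun k => by have := hP k; omega)
  have hP1 : ∀ k, 1 ≤ P k := fun k => hP0.trans (hPm.monotone (Nat.zero_le k))
  let bk : ℝ → ℝ := fun c => if c = e ⟨0, by omega⟩ then e ⟨1, by omega⟩ else e ⟨0, by omega⟩
  have hbk : ∀ c, bk c ≠ c ∧ ∃ k, bk c = e k := by
    intro c
    by_cases hc : c = e ⟨0, by omega⟩
    · refine ⟨?_, ⟨1, by omega⟩, by simp [bk, hc]⟩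
      simp only [bk, if_pos hc]
      rw [hc]
      intro h
      have := hinj h
      simp at this
    · refine ⟨?_, ⟨0, by omega⟩, by simp [bk, hc]⟩
      simp only [bk, if_neg hc]
      exact fun h => hc h.symm
  let free : ℕ → Prop := fun i => ¬ Cov L P i
  obtain ⟨C, hC⟩ := density hL hP hd hP1 (free := free) (fun i hi => not_not.1 hi) hτ
  let y : ((ℕ → Fin M) × (ℕ → Fin M)) → ℕ → ℝ := fun s => et e s.2
  let x : ((ℕ → Fin M) × (ℕ → Fin M)) → ℕ → ℝ :=
    fun s => om L P (et e s.2) bk (fun i => e (s.1 (Nat.count free i)))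
  have hmem := fun s : (ℕ → Fin M) × (ℕ → Fin M) => member hβ hN he hbk hA hAB ha hb hL hL0 hP0 hP
    H1 H2 H3 H4 (fun i => s.1 (Nat.count free i)) s.2
  let Φ : ((ℕ → Fin M) × (ℕ → Fin M)) → ℝ × ℝ := fun s => (code β N (x s), code β N (y s))
  let Ψ : ((ℕ → Fin M) × (ℕ → Fin M)) → ℝ × ℝ := fun s => (Real.ofDigits s.1, Real.ofDigits s.2)
  have hsub : range Φ ⊆ E := by
    rw [hE]
    rintro _ ⟨s, rfl⟩
    exact ⟨code_mem' hβ hN (hmem s).2.1, code_mem' hβ hN (hmem s).1, (hmem s).2.2⟩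
  let r : NNReal := ⟨τ ^ 2, by positivity⟩
  have hr : 0 < r := by
    rw [← NNReal.coe_pos]; change 0 < τ ^ 2; positivity
  have hMp : (0:ℝ) < M := by positivity
  have hβ0 : 0 < β := by linarith
  set K1 : ℝ := (M:ℝ) ^ (C:ℝ) * β ^ ((N:ℝ) * 2 * τ ^ 2) with hK1
  set K2 : ℝ := (M:ℝ) ^ ((2:ℕ):ℝ) * β ^ ((N:ℝ) * 2 * τ ^ 2) with hK2
  have hK1p : 0 ≤ K1 := by positivity
  have hK2p : 0 ≤ K2 := by positivity
  have hhol := holder_dim Φ Ψ hr (C := K1 + K2) (by positivity) (by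
    intro s s'
    change _ ≤ (K1 + K2) * _ ^ (τ ^ 2)
    have c1 : |Real.ofDigits s.1 - Real.ofDigits s'.1| ≤
        K1 * |code β N (x s) - code β N (x s')| ^ (τ ^ 2) := by
      refine coord hβ hN hM hτ0 hMτ (c := fun i => Nat.count free i) hC (hmem s).2.1
        (hmem s').2.1 ?_
      intro i hi j hj
      have hfin : ∀ hf : (setOf free).Finite, j < hf.toFinset.card := fun hf =>
        hj.trans_le (Nat.count_le_card hf i)
      have h1 : Nat.nth free j < i := Nat.nth_lt_of_lt_count hj
      have h2 : free (Nat.nth free j) := Nat.nth_mem j hfin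
      have h3 := hi _ h1
      rw [om_free _ _ _ h2, om_free _ _ _ h2, Nat.count_nth hfin] at h3
      exact hinj h3
    have c2 : |Real.ofDigits s.2 - Real.ofDigits s'.2| ≤
        K2 * |code β N (y s) - code β N (y s')| ^ (τ ^ 2) := by
      refine coord hβ hN hM hτ0 hMτ (c := fun i => i - 2) ?_ (hmem s).1 (hmem s').1 ?_
      · intro i
        have h1 : (i:ℝ) ≤ ((i - 2 : ℕ):ℝ) + (2:ℕ) := by exact_mod_cast (by omega)
        have : (0:ℝ) ≤ i := Nat.cast_nonneg i
        nlinarith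
      · intro i hi j hj
        have h1 := hi (j + 2) (by omega)
        simp only [et, show ¬ (j + 2 < 2) by omega, if_false, Nat.add_sub_cancel] at h1
        exact hinj h1
    have d1 : |code β N (x s) - code β N (x s')| ≤ dist (Φ s) (Φ s') := le_max_left _ _
    have d2 : |code β N (y s) - code β N (y s')| ≤ dist (Φ s) (Φ s') := le_max_right _ _
    have p1 := Real.rpow_le_rpow (abs_nonneg _) d1 (by positivity : 0 ≤ τ ^ 2)
    have p2 := Real.rpow_le_rpow (abs_nonneg _) d2 (by positivity : 0 ≤ τ ^ 2)
    have pp : 0 ≤ dist (Φ s) (Φ s') ^ (τ ^ 2) := by positivity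
    refine max_le ?_ ?_
    · refine (c1.trans (mul_le_mul_of_nonneg_left p1 hK1p)).trans ?_
      exact mul_le_mul_of_nonneg_right (by linarith) pp
    · refine (c2.trans (mul_le_mul_of_nonneg_left p2 hK2p)).trans ?_
      exact mul_le_mul_of_nonneg_right (by linarith) pp)
  have hbig : Icc (0:ℝ) 1 ×ˢ Icc (0:ℝ) 1 ⊆ range Ψ := by
    rintro ⟨p, q⟩ ⟨hp, hq⟩
    obtain ⟨u, -, hu⟩ := Real.ofDigits_SurjOn (b := M) (by omega) hp
    obtain ⟨v, -, hv⟩ := Real.ofDigits_SurjOn (b := M) (by omega) hq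
    exact ⟨(u, v), Prod.ext hu hv⟩
  have hdim : dimH (range Ψ) = 2 := by
    have : (interior (range Ψ)).Nonempty := by
      refine Nonempty.mono (interior_mono hbig) ?_
      rw [interior_prod_eq, interior_Icc]
      exact ⟨(1/2, 1/2), by constructor <;> constructor <;> norm_num⟩
    rw [Real.dimH_of_nonempty_interior this]
    simp
  rw [hdim] at hhol
  have h2 : (2:ENNReal) * r ≤ dimH (range Φ) := by
    refine (ENNReal.le_div_iff_mul_le (Or.inl ?_) (Or.inl ?_)).1 hhol
    · exact_mod_cast hr.ne'
    · exact ENNReal.coe_ne_top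
  have h3 : ENNReal.ofReal (2 * τ ^ 2) = 2 * (r : ENNReal) := by
    rw [ENNReal.ofReal_mul (by norm_num)]
    congr 1
    · simp
    · rw [← ENNReal.ofReal_coe_nnreal]; rfl
  rw [h3]
  exact h2.trans (dimH_mono hsub)

lemma final {β : ℝ} (hβ : 1 < β) {A B : EReal} (hA : 0 ≤ A) (hAB : A ≤ B) (E : Set (ℝ × ℝ))
    (hE : E = {p : ℝ × ℝ | p.1 ∈ Set.Ico (0:ℝ) 1 ∧ p.2 ∈ Set.Ico (0:ℝ) 1 ∧
      Filter.liminf (fun n => waitingRatio β p.1 p.2 n) Filter.atTop = A ∧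
      Filter.limsup (fun n => waitingRatio β p.1 p.2 n) Filter.atTop = B}) :
    dimH E = 2 := by
  apply le_antisymm
  · refine (dimH_mono (subset_univ E)).trans ?_
    rw [Real.dimH_univ_eq_finrank (ℝ × ℝ)]
    simp
  · have ht : Tendsto (fun τ : ℝ => ENNReal.ofReal (2 * τ ^ 2)) (nhdsWithin 1 (Iio 1))
        (nhds (ENNReal.ofReal (2 * 1 ^ 2))) := by
      refine Tendsto.mono_left ?_ nhdsWithin_le_nhds
      exact (ENNReal.continuous_ofReal.comp (by fun_prop)).tendsto 1
    have h2 : ENNReal.ofReal (2 * 1 ^ 2) = 2 := by norm_num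
    rw [h2] at ht
    refine le_of_tendsto ht ?_
    filter_upwards [Ioo_mem_nhdsLT (show (0:ℝ) < 1 by norm_num)] with τ hτ
    exact lower hβ hA hAB hτ.1 hτ.2 E hE

end BW

/-- The planar waiting set E_β(a,b) has Hausdorff dimension 2 for any 0 ≤ a ≤ b ≤ ∞. -/
theorem dimH_waiting_set (β : ℝ) (hβ : 1 < β) (a b : EReal) (h0 : 0 ≤ a) (hab : a ≤ b) :
    dimH {p : ℝ × ℝ | p.1 ∈ Set.Ico (0:ℝ) 1 ∧ p.2 ∈ Set.Ico (0:ℝ) 1 ∧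
      Filter.liminf (fun n => waitingRatio β p.1 p.2 n) Filter.atTop = a ∧
      Filter.limsup (fun n => waitingRatio β p.1 p.2 n) Filter.atTop = b} = 2 := by
  exact BW.final hβ h0 hab _ rfl
end
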